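/- arXiv:math/0503465 — 3 statements merged into one kernel-verified Lean document; each statement's English description precedes it below -/
import Mathlib

section
/- Let r, n ≥ 1, m = rn, and d ≥ 1. The number of pairs (P, Q) of equal-shape standard Young tableaux with entries [m] and at most d columns, both satisfying condition (T), equals the number of closed lattice walks of length 2m in ℤ^d from the origin to itself of the form a₁⋯a_m | b₁⋯b_m (m positive steps followed by m negative steps) staying in the region x₁ ≥ x₂ ≥ ... ≥ x_d, such that both a and b (read as column sequences) satisfy condition (W): a_{r(i−1)+s} ≥ a_{r(i−1)+s+1} for all i ∈ [n], 1 ≤ s < r. -/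
/-- Row-insert `x` into a single row: either append at the end, or bump the
smallest entry greater than `x`. Returns the new row and the bumped value. -/
def insertInRow (row : List ℕ) (x : ℕ) : List ℕ × Option ℕ :=
  match row.findIdx? (fun y => decide (x < y)) with
  | none => (row ++ [x], none)
  | some i => (row.set i x, row[i]?)

/-- RSK row-insertion (bumping) of `x` into a tableau given as its list of rows. -/
def rowInsertT : List (List ℕ) → ℕ → List (List ℕ)
  | [], x => [[x]]
  | r :: rs, x =>
    match insertInRow r x with
    | (r', none) => r' :: rs
    | (r', some y) => r' :: rowInsertT rs y

/-- The shape of a tableau: the list of its row lengths. -/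
def shapeT (T : List (List ℕ)) : List ℕ := T.map List.length

/-- The number of columns of a tableau: the length of its first row. -/
def numCols (T : List (List ℕ)) : ℕ := (T.getD 0 []).length

/-- The insertion tableau `P` of a word, built by successive row-insertions. -/
def rskP (l : List ℕ) : List (List ℕ) := l.foldl rowInsertT []

/-- The index of the row in which row-inserting `x` into `T` creates a new box. -/
def newBoxRow (T : List (List ℕ)) (x : ℕ) : ℕ :=
  (List.range (rowInsertT T x).length).findIdx
    (fun i => decide ((T.getD i []).length < ((rowInsertT T x).getD i []).length))

/-- The (row, column) position (0-indexed) of the new box created by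
row-inserting `x` into `T`. -/
def newBox (T : List (List ℕ)) (x : ℕ) : ℕ × ℕ :=
  (newBoxRow T x, ((rowInsertT T x).getD (newBoxRow T x) []).length - 1)

/-- One step of the full RSK algorithm on the pair `(P, Q)`: insert the value
`xi.1` into `P` and record the label `xi.2` in `Q` at the newly created box. -/
def rskStep (PQ : List (List ℕ) × List (List ℕ)) (xi : ℕ × ℕ) :
    List (List ℕ) × List (List ℕ) :=
  let r := newBoxRow PQ.1 xi.1
  (rowInsertT PQ.1 xi.1,
    if r < PQ.2.length then PQ.2.set r (PQ.2.getD r [] ++ [xi.2]) else PQ.2 ++ [[xi.2]])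

/-- The RSK pair `(P, Q)` of a word (the `i`-th letter gets recording label `i`). -/
def rskPQ (l : List ℕ) : List (List ℕ) × List (List ℕ) :=
  (l.zip (List.range' 1 l.length)).foldl rskStep ([], [])

/-- `T` is a standard Young tableau with entries `{1, …, m}`, given as its list of
rows: no empty rows, weakly decreasing row lengths, rows strictly increasing left
to right, columns strictly increasing top to bottom, and the entries are exactly
`1, …, m`. -/
def isSYT (m : ℕ) (T : List (List ℕ)) : Prop :=
  [] ∉ T ∧
  List.Chain' (fun a b => b.length ≤ a.length) T ∧
  (∀ r ∈ T, List.Chain' (· < ·) r) ∧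
  (∀ i j : ℕ, j < (T.getD (i + 1) []).length →
      (T.getD i []).getD j 0 < (T.getD (i + 1) []).getD j 0) ∧
  T.flatten.Perm (List.range' 1 m)

/-- The one-line word of a permutation of `Fin m`, with values in `{1, …, m}`. -/
def permList {m : ℕ} (π : Equiv.Perm (Fin m)) : List ℕ :=
  (List.finRange m).map (fun i => (π i : ℕ) + 1)

/-- The (0-indexed) row of tableau `T` containing the entry `e`. -/
def rowOf (T : List (List ℕ)) (e : ℕ) : ℕ := T.findIdx (fun r => r.contains e)

/-- **Condition (T)** for a tableau with entries `[m]`, `m = rn`: for each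
`i ∈ [n]` and `1 ≤ s < r`, the row containing `r(i−1)+s` is strictly above the
row containing `r(i−1)+s+1` (equivalently, for every entry `e` with
`e % r ≠ 0` and `e + 1 ≤ m`). -/
def condT (m r : ℕ) (T : List (List ℕ)) : Prop :=
  ∀ e : ℕ, 1 ≤ e → e + 1 ≤ m → e % r ≠ 0 → rowOf T e < rowOf T (e + 1)

/-- **Condition (W)** for a sequence of `m = rn` steps (0-indexed positions):
within each block of `r` consecutive positions the directions are weakly
decreasing, i.e. `a_{r(i−1)+s} ≥ a_{r(i−1)+s+1}` for `i ∈ [n]`, `1 ≤ s < r`. -/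
def condW {m : ℕ} (r : ℕ) (a : Fin m → ℕ) : Prop :=
  ∀ q : ℕ, ∀ h : q + 1 < m, (q + 1) % r ≠ 0 →
    a ⟨q + 1, h⟩ ≤ a ⟨q, by omega⟩

/-- The walk with positive unit steps in directions `a₁, …` (0-indexed) stays in
the region `x₁ ≥ x₂ ≥ … ≥ x_d`: every prefix has at least as many steps in
direction `k` as in direction `k + 1`. -/
def staysInRegion {m : ℕ} (a : Fin m → ℕ) : Prop :=
  ∀ t k : ℕ,
    (Finset.univ.filter (fun i : Fin m => (i : ℕ) < t ∧ a i = k + 1)).card ≤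
    (Finset.univ.filter (fun i : Fin m => (i : ℕ) < t ∧ a i = k)).card

/-!
The column word of a tableau records, for `e = 1, …, m`, the column containing `e`. The entries
`≤ t` of a standard tableau form a Young diagram for every `t`, so both the row word and the column
word of a standard tableau are walks staying in the region `x₁ ≥ x₂ ≥ …`, and the tableau is
recovered from either one. The two words are exchanged by the conjugation sending `q` to the number
of earlier occurrences of the letter `a q`: it transposes the diagram traced out up to each time
`t`, hence is an involution. Applying the column word to both tableaux of a pair turns equality of
shapes into closedness of the walk and condition (T) into condition (W), because the entry `e + 1`
lies strictly below `e` exactly when it lies weakly to the left of `e`.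
-/

open Finset

section Words

variable {α : Type*} [DecidableEq α] {m : ℕ}

/-- The number of occurrences of the letter `k` among the first `t` letters of the word `a`.
With `α = ℕ` this is the `k`-th coordinate, after `t` steps, of the walk with directions `a`. -/
def letterCount (a : Fin m → α) (t : ℕ) (k : α) : ℕ :=
  #{i : Fin m | (i : ℕ) < t ∧ a i = k}

/-- The conjugate word, whose letter at `q` is the number of earlier occurrences of `a q`. If `a` is
the row word of a standard tableau, this is its column word, and conversely. -/
def conjWord (a : Fin m → α) (q : Fin m) : ℕ := letterCount a q (a q)

variable {a : Fin m → α}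

theorem letterCount_mono (k : α) : Monotone (letterCount a · k) := fun _ _ h =>
  card_le_card (monotone_filter_right _ fun _ _ hi => ⟨hi.1.trans_le h, hi.2⟩)

theorem letterCount_length (k : α) : letterCount a m k = #{i | a i = k} := by
  simp [letterCount]

theorem letterCount_succ (q : Fin m) (k : α) :
    letterCount a (q + 1) k = letterCount a q k + if a q = k then 1 else 0 := by
  unfold letterCount
  split_ifs
  · rw [← card_insert_of_notMem (a := q) (by simp)]
    congr 1
    ext i
    grind
  · rw [add_zero]
    congr 1
    ext i
    grind

theorem letterCount_succ_of_ne {q : Fin m} {k : α} (h : a q ≠ k) :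
    letterCount a (q + 1) k = letterCount a q k := by
  simp [letterCount_succ, h]

theorem conjWord_lt_letterCount {q : Fin m} {t : ℕ} (h : (q : ℕ) < t) :
    conjWord a q < letterCount a t (a q) :=
  calc conjWord a q < letterCount a (q + 1) (a q) := by simp [conjWord, letterCount_succ]
    _ ≤ letterCount a t (a q) := letterCount_mono _ h

theorem injective_letter_conjWord : Function.Injective fun q => (a q, conjWord a q) := by
  have conjWord_lt {p q : Fin m} (hpq : p < q) (h : a p = a q) : conjWord a p < conjWord a q := by
    rw [conjWord.eq_def a q, ← h]
    exact conjWord_lt_letterCount hpq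
  intro p q h
  obtain ⟨h, hconj⟩ := Prod.ext_iff.mp h
  rcases lt_trichotomy p q with hpq | hpq | hpq
  · exact absurd hconj (conjWord_lt hpq h).ne
  · exact hpq
  · exact absurd hconj (conjWord_lt hpq h.symm).ne'

theorem image_conjWord (t : ℕ) (k : α) :
    ({q | (q : ℕ) < t ∧ a q = k} : Finset (Fin m)).image (conjWord a) =
      range (letterCount a t k) := by
  refine eq_of_subset_of_card_le (image_subset_iff.mpr fun q hq => ?_) ?_
  · obtain ⟨hqt, rfl⟩ := (mem_filter_univ q).mp hq
    exact mem_range.mpr (conjWord_lt_letterCount hqt)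
  · rw [card_range, card_image_of_injOn, letterCount]
    intro p hp q hq h
    have hpk := ((mem_filter_univ p).mp hp).2
    have hqk := ((mem_filter_univ q).mp hq).2
    exact injective_letter_conjWord (Prod.ext (hpk.trans hqk.symm) h)

theorem lt_letterCount_iff {i t : ℕ} {k : α} :
    i < letterCount a t k ↔ ∃ q : Fin m, (q : ℕ) < t ∧ a q = k ∧ conjWord a q = i := by
  rw [← mem_range, ← image_conjWord]
  simp [and_assoc]

end Words

section Conjugation

variable {m : ℕ} {a b : Fin m → ℕ}

theorem staysInRegion.antitone_letterCount (ha : staysInRegion a) (t : ℕ) :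
    Antitone (letterCount a t) :=
  antitone_nat_of_succ_le (ha t)

/-- The Young diagram traced out by the first `t` letters of `a`: its row lengths are the
coordinates of the walk after `t` steps, and the letter at `q` adds the cell
`(a q, conjWord a q)`. -/
def staysInRegion.diagram (ha : staysInRegion a) (t : ℕ) : YoungDiagram where
  cells := ({q | (q : ℕ) < t} : Finset (Fin m)).image fun q => (a q, conjWord a q)
  isLowerSet := by
    have mem_iff (k i : ℕ) : (k, i) ∈ (({q | (q : ℕ) < t} : Finset (Fin m)).image
        fun q => (a q, conjWord a q)) ↔ i < letterCount a t k := by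
      simp [lt_letterCount_iff]
    rintro ⟨k, i⟩ ⟨k', i'⟩ ⟨hk, hi⟩ h
    rw [mem_coe, mem_iff] at h ⊢
    exact hi.trans_lt (h.trans_le (ha.antitone_letterCount t hk))

theorem staysInRegion.mem_diagram (ha : staysInRegion a) {t k i : ℕ} :
    (k, i) ∈ ha.diagram t ↔ i < letterCount a t k := by
  rw [← YoungDiagram.mem_cells]
  simp [diagram, lt_letterCount_iff]

theorem staysInRegion.colLen_diagram (ha : staysInRegion a) (t i : ℕ) :
    (ha.diagram t).colLen i = letterCount (conjWord a) t i := by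
  rw [YoungDiagram.colLen_eq_card, YoungDiagram.col, diagram, filter_image,
    card_image_of_injective _ injective_letter_conjWord, filter_filter, letterCount]

theorem staysInRegion.lt_letterCount_conjWord_iff (ha : staysInRegion a) {t i k : ℕ} :
    k < letterCount (conjWord a) t i ↔ i < letterCount a t k := by
  rw [← ha.colLen_diagram, ← YoungDiagram.mem_iff_lt_colLen, ha.mem_diagram]

theorem staysInRegion_conjWord (ha : staysInRegion a) : staysInRegion (conjWord a) := by
  intro t i
  refine le_of_forall_lt fun k hk => ?_
  exact ha.lt_letterCount_conjWord_iff.mpr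
    ((Nat.lt_succ_self i).trans (ha.lt_letterCount_conjWord_iff.mp hk))

theorem staysInRegion.conjWord_lt_letterCount_iff (ha : staysInRegion a) {q : Fin m} {k : ℕ} :
    conjWord a q < letterCount a q k ↔ k < a q := by
  constructor
  · intro h
    by_contra! hk
    exact h.not_ge (ha.antitone_letterCount q hk)
  · intro h
    calc conjWord a q < letterCount a (q + 1) (a q) := conjWord_lt_letterCount q.1.lt_succ_self
      _ ≤ letterCount a (q + 1) k := ha.antitone_letterCount _ h.le
      _ = letterCount a q k := letterCount_succ_of_ne h.ne'

theorem staysInRegion.conjWord_conjWord (ha : staysInRegion a) :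
    conjWord (conjWord a) = a := by
  funext q
  refine eq_of_forall_lt_iff fun k => ?_
  exact ha.lt_letterCount_conjWord_iff.trans ha.conjWord_lt_letterCount_iff

theorem staysInRegion.letterCount_conjWord_congr (ha : staysInRegion a) (hb : staysInRegion b)
    {t : ℕ} (h : ∀ k, letterCount a t k = letterCount b t k) (k : ℕ) :
    letterCount (conjWord a) t k = letterCount (conjWord b) t k :=
  eq_of_forall_lt_iff fun i => by
    rw [ha.lt_letterCount_conjWord_iff, hb.lt_letterCount_conjWord_iff, h]

theorem staysInRegion.letterCount_conjWord_eq_iff (ha : staysInRegion a) (hb : staysInRegion b)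
    {t : ℕ} : (∀ k, letterCount (conjWord a) t k = letterCount (conjWord b) t k) ↔
      ∀ k, letterCount a t k = letterCount b t k := by
  refine ⟨fun h => ?_, ha.letterCount_conjWord_congr hb⟩
  simpa only [ha.conjWord_conjWord, hb.conjWord_conjWord] using
    (staysInRegion_conjWord ha).letterCount_conjWord_congr (staysInRegion_conjWord hb) h

theorem staysInRegion.letterCount_zero_le_iff (ha : staysInRegion a) {d : ℕ} :
    letterCount a m 0 ≤ d ↔ ∀ q, conjWord a q < d := by
  constructor
  · intro h q
    calc conjWord a q < letterCount a m (a q) := conjWord_lt_letterCount q.2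
      _ ≤ letterCount a m 0 := ha.antitone_letterCount m (Nat.zero_le _)
      _ ≤ d := h
  · intro h
    by_contra! hd
    obtain ⟨q, -, -, hq⟩ := lt_letterCount_iff.mp hd
    exact (h q).ne hq

theorem staysInRegion.lt_iff_conjWord_le (ha : staysInRegion a) {p q : Fin m}
    (hpq : (q : ℕ) = p + 1) : a p < a q ↔ conjWord a q ≤ conjWord a p := by
  rw [conjWord, conjWord, hpq]
  constructor
  · intro h
    rw [letterCount_succ_of_ne h.ne]
    exact ha.antitone_letterCount p h.le
  · contrapose!
    intro h
    calc letterCount a p (a p) < letterCount a (p + 1) (a p) := conjWord_lt_letterCount (by simp)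
      _ ≤ letterCount a (p + 1) (a q) := ha.antitone_letterCount _ h

theorem bijOn_conjWord (m : ℕ) :
    Set.BijOn (conjWord (m := m)) {a | staysInRegion a} {a | staysInRegion a} :=
  have hinv : Set.LeftInvOn conjWord (conjWord (m := m)) {a | staysInRegion a} :=
    fun _ => staysInRegion.conjWord_conjWord
  Set.InvOn.bijOn ⟨hinv, hinv⟩ (fun _ => staysInRegion_conjWord) (fun _ => staysInRegion_conjWord)

end Conjugation

section Lists

variable {α : Type*}

theorem lt_countP_le_iff_of_pairwise [Preorder α] [DecidableLE α] {L : List α}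
    (hL : L.Pairwise (· ≤ ·)) {x : α} {j : ℕ} :
    j < L.countP (· ≤ x) ↔ ∃ h : j < L.length, L[j] ≤ x := by
  induction L generalizing j with
  | nil => simp
  | cons y L ih =>
    obtain ⟨hy, hL⟩ := List.pairwise_cons.mp hL
    by_cases hyx : y ≤ x
    · rw [List.countP_cons_of_pos (by simpa using hyx)]
      cases j with
      | zero => simp [hyx]
      | succ j => simp [ih hL]
    · have hall : ∀ z ∈ y :: L, ¬ z ≤ x := by
        rintro z (_ | ⟨_, hz⟩) hzx
        exacts [hyx hzx, hyx ((hy z hz).trans hzx)]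
      rw [List.countP_eq_zero.mpr (by simpa using hall)]
      simpa using fun h => hall _ (List.getElem_mem h)

theorem ext_getD_of_notMem {d : α} {S T : List α} (hS : d ∉ S) (hT : d ∉ T)
    (h : ∀ k, S.getD k d = T.getD k d) : S = T := by
  refine List.ext_getElem? fun k => ?_
  have hk := h k
  rw [List.getD_eq_getElem?_getD, List.getD_eq_getElem?_getD] at hk
  have hSk : S[k]? ≠ some d := fun h => hS (List.mem_of_getElem? h)
  have hTk : T[k]? ≠ some d := fun h => hT (List.mem_of_getElem? h)
  grind

theorem mem_getD_nil_iff {T : List (List α)} {k : ℕ} {e : α} :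
    e ∈ T.getD k [] ↔ ∃ h : k < T.length, e ∈ T[k] := by
  by_cases hk : k < T.length
  · simp [hk]
  · simp [hk]

theorem mem_flatten_iff_exists_mem_getD {T : List (List α)} {e : α} :
    e ∈ T.flatten ↔ ∃ k, e ∈ T.getD k [] := by
  rw [List.mem_flatten]
  constructor
  · rintro ⟨l, hl, he⟩
    obtain ⟨k, hk, rfl⟩ := List.getElem_of_mem hl
    exact ⟨k, mem_getD_nil_iff.mpr ⟨hk, he⟩⟩
  · rintro ⟨k, he⟩
    obtain ⟨hk, he⟩ := mem_getD_nil_iff.mp he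
    exact ⟨T[k], List.getElem_mem hk, he⟩

theorem shapeT_eq_iff_length_getD_eq {S T : List (List ℕ)} (hS : [] ∉ S) (hT : [] ∉ T) :
    shapeT S = shapeT T ↔ ∀ k, (S.getD k []).length = (T.getD k []).length := by
  have getD_shapeT (U : List (List ℕ)) (k : ℕ) :
      (shapeT U).getD k 0 = (U.getD k []).length := List.getD_map _ [] List.length
  have zero_notMem {U : List (List ℕ)} (hU : [] ∉ U) : 0 ∉ shapeT U := by
    simpa [shapeT] using hU
  simp only [← getD_shapeT]
  exact ⟨fun h k => by rw [h], ext_getD_of_notMem (zero_notMem hS) (zero_notMem hT)⟩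

theorem rowOf_eq_of_mem_getD {T : List (List ℕ)} (hT : T.Pairwise List.Disjoint) {e k : ℕ}
    (he : e ∈ T.getD k []) : rowOf T e = k := by
  obtain ⟨hk, he⟩ := mem_getD_nil_iff.mp he
  refine (List.findIdx_eq hk).mpr ⟨by simpa using he, fun j hj => ?_⟩
  simpa using fun h => List.pairwise_iff_getElem.mp hT j k (hj.trans hk) hk hj h he

end Lists

section TableauOfWord

variable {m : ℕ}

/-- The increasing list of the entries `q + 1` with `a q = k`; the shift by one turns the positions
of `Fin m` into the tableau entries `1, …, m`. -/
def letterRow {α : Type*} [DecidableEq α] (a : Fin m → α) (k : α) : List ℕ :=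
  ((List.finRange m).filter (a · = k)).map fun q : Fin m => (q : ℕ) + 1

section LetterRow

variable {α : Type*} [DecidableEq α] {a : Fin m → α} {k : α}

theorem mem_letterRow {e : ℕ} : e ∈ letterRow a k ↔ ∃ q : Fin m, a q = k ∧ (q : ℕ) + 1 = e := by
  simp [letterRow]

theorem succ_mem_letterRow {q : Fin m} : (q : ℕ) + 1 ∈ letterRow a k ↔ a q = k := by
  simp [mem_letterRow, Fin.val_inj]

theorem pairwise_lt_letterRow : (letterRow a k).Pairwise (· < ·) :=
  List.pairwise_map.mpr <| ((List.pairwise_lt_finRange m).filter _).imp fun h =>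
    Nat.succ_lt_succ h

theorem disjoint_letterRow {l : α} (h : k ≠ l) : (letterRow a k).Disjoint (letterRow a l) := by
  intro e hk hl
  obtain ⟨q, rfl, rfl⟩ := mem_letterRow.mp hk
  exact h (succ_mem_letterRow.mp hl)

theorem countP_letterRow (t : ℕ) : (letterRow a k).countP (· ≤ t) = letterCount a t k := by
  rw [letterRow, List.countP_map, List.countP_filter, letterCount, List.countP_eq_length_filter,
    ← List.toFinset_card_of_nodup ((List.nodup_finRange m).filter _)]
  congr 1
  ext i
  simp

theorem length_letterRow : (letterRow a k).length = letterCount a m k := by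
  rw [← countP_letterRow, eq_comm, List.countP_eq_length]
  intro e he
  obtain ⟨q, -, rfl⟩ := mem_letterRow.mp he
  simp

theorem lt_letterCount_iff_getElem_letterRow_le {t j : ℕ} :
    j < letterCount a t k ↔ ∃ h : j < (letterRow a k).length, (letterRow a k)[j] ≤ t := by
  rw [← countP_letterRow, lt_countP_le_iff_of_pairwise (pairwise_lt_letterRow.imp le_of_lt)]

end LetterRow

/-- The tableau with row word `a`, that is, with `e` in row `a (e - 1)` for `e = 1, …, m`. It has
one row for each `k` up to the largest letter, so it has empty rows if `a` skips a letter. -/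
def tableauOfWord (a : Fin m → ℕ) : List (List ℕ) :=
  (List.range (univ.sup (a · + 1))).map (letterRow a)

variable {a : Fin m → ℕ}

theorem getD_tableauOfWord (k : ℕ) : (tableauOfWord a).getD k [] = letterRow a k := by
  by_cases hk : k < univ.sup (a · + 1)
  · rw [List.getD_eq_getElem _ _ (by simpa [tableauOfWord] using hk)]
    simp [tableauOfWord]
  · rw [List.getD_eq_default _ _ (by simpa [tableauOfWord] using hk), eq_comm,
      List.eq_nil_iff_forall_not_mem]
    intro e he
    obtain ⟨q, rfl, -⟩ := mem_letterRow.mp he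
    exact hk (Nat.lt_of_succ_le (le_sup (f := (a · + 1)) (mem_univ q)))

theorem pairwise_disjoint_tableauOfWord : (tableauOfWord a).Pairwise List.Disjoint :=
  List.pairwise_map.mpr <| List.pairwise_lt_range.imp fun h => disjoint_letterRow h.ne

theorem flatten_tableauOfWord_perm : (tableauOfWord a).flatten.Perm (List.range' 1 m) := by
  have nodup : (tableauOfWord a).flatten.Nodup := by
    refine List.nodup_flatten.mpr ⟨fun l hl => ?_, pairwise_disjoint_tableauOfWord⟩
    obtain ⟨k, -, rfl⟩ := List.mem_map.mp hl
    exact pairwise_lt_letterRow.imp ne_of_lt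
  refine (List.perm_ext_iff_of_nodup nodup List.nodup_range').mpr fun e => ?_
  simp only [mem_flatten_iff_exists_mem_getD, getD_tableauOfWord, mem_letterRow, List.mem_range'_1]
  constructor
  · rintro ⟨_, q, -, rfl⟩
    omega
  · rintro ⟨h1, h2⟩
    exact ⟨_, ⟨e - 1, by omega⟩, rfl, Nat.sub_add_cancel h1⟩

theorem staysInRegion.nil_notMem_tableauOfWord (ha : staysInRegion a) : [] ∉ tableauOfWord a := by
  intro h
  obtain ⟨k, hk, hnil⟩ := List.mem_map.mp h
  obtain ⟨q, -, hkq⟩ := Finset.lt_sup_iff.mp (List.mem_range.mp hk)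
  have hpos : 0 < letterCount a m k :=
    calc 0 ≤ conjWord a q := Nat.zero_le _
      _ < letterCount a m (a q) := conjWord_lt_letterCount q.2
      _ ≤ letterCount a m k := ha.antitone_letterCount m (Nat.le_of_lt_succ hkq)
  simp [← length_letterRow, hnil] at hpos

theorem staysInRegion.getD_letterRow_lt (ha : staysInRegion a) {i j : ℕ}
    (hj : j < (letterRow a (i + 1)).length) :
    (letterRow a i).getD j 0 < (letterRow a (i + 1)).getD j 0 := by
  rw [List.getD_eq_getElem _ _ hj]
  set e := (letterRow a (i + 1))[j]
  obtain ⟨hj', hle⟩ : ∃ h : j < (letterRow a i).length, (letterRow a i)[j] ≤ e :=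
    lt_letterCount_iff_getElem_letterRow_le.mp <|
      (lt_letterCount_iff_getElem_letterRow_le.mpr ⟨hj, le_rfl⟩).trans_le (ha e i)
  rw [List.getD_eq_getElem _ _ hj']
  refine hle.lt_of_ne fun heq => ?_
  exact disjoint_letterRow i.succ_ne_self.symm (List.getElem_mem hj') (heq ▸ List.getElem_mem hj)

theorem isSYT_tableauOfWord (ha : staysInRegion a) : isSYT m (tableauOfWord a) := by
  refine ⟨ha.nil_notMem_tableauOfWord, ?_, ?_, ?_, flatten_tableauOfWord_perm⟩
  · refine List.isChain_map _ |>.mpr <| (List.isChain_range _ _).mpr fun k _ => ?_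
    rw [length_letterRow, length_letterRow]
    exact ha m k
  · intro l hl
    obtain ⟨k, -, rfl⟩ := List.mem_map.mp hl
    exact pairwise_lt_letterRow.isChain
  · intro i j hj
    simp only [getD_tableauOfWord] at hj ⊢
    exact ha.getD_letterRow_lt hj

end TableauOfWord

section ColumnWord

variable {m : ℕ} {P Q T : List (List ℕ)}

/-- The row indices of the entries `1, …, m` of `T`. -/
def rowWord (m : ℕ) (T : List (List ℕ)) (q : Fin m) : ℕ := rowOf T (q + 1)

/-- The column indices of the entries `1, …, m` of `T`, encoded as the number of smaller entries in
the same row. -/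
def columnWord (m : ℕ) (T : List (List ℕ)) : Fin m → ℕ := conjWord (rowWord m T)

theorem rowWord_tableauOfWord (a : Fin m → ℕ) : rowWord m (tableauOfWord a) = a := by
  funext q
  refine rowOf_eq_of_mem_getD pairwise_disjoint_tableauOfWord ?_
  rw [getD_tableauOfWord, succ_mem_letterRow]

theorem isSYT.pairwise_lt_getD (hT : isSYT m T) (k : ℕ) : (T.getD k []).Pairwise (· < ·) := by
  by_cases hk : k < T.length
  · rw [List.getD_eq_getElem _ _ hk]
    exact List.isChain_iff_pairwise.mp (hT.2.2.1 _ (List.getElem_mem hk))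
  · rw [List.getD_eq_default _ _ (not_lt.mp hk)]
    exact List.Pairwise.nil

theorem isSYT.length_getD_succ_le (hT : isSYT m T) (k : ℕ) :
    (T.getD (k + 1) []).length ≤ (T.getD k []).length := by
  by_cases hk : k + 1 < T.length
  · rw [List.getD_eq_getElem _ _ hk, List.getD_eq_getElem _ _ (Nat.lt_of_succ_lt hk)]
    exact List.isChain_iff_getElem.mp hT.2.1 k hk
  · rw [List.getD_eq_default _ _ (not_lt.mp hk)]
    exact Nat.zero_le _

theorem isSYT.mem_flatten_iff (hT : isSYT m T) {e : ℕ} :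
    e ∈ T.flatten ↔ ∃ q : Fin m, (q : ℕ) + 1 = e := by
  rw [hT.2.2.2.2.mem_iff, List.mem_range'_1]
  exact ⟨fun h => ⟨⟨e - 1, by omega⟩, Nat.sub_add_cancel h.1⟩, by rintro ⟨q, rfl⟩; omega⟩

theorem isSYT.rowWord_eq_iff (hT : isSYT m T) {q : Fin m} {k : ℕ} :
    rowWord m T q = k ↔ (q : ℕ) + 1 ∈ T.getD k [] := by
  have hdisj : T.Pairwise List.Disjoint :=
    (List.nodup_flatten.mp (hT.2.2.2.2.nodup_iff.mpr List.nodup_range')).2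
  refine ⟨?_, rowOf_eq_of_mem_getD hdisj⟩
  rintro rfl
  obtain ⟨k, hk⟩ := mem_flatten_iff_exists_mem_getD.mp (hT.mem_flatten_iff.mpr ⟨q, rfl⟩)
  rwa [rowWord, rowOf_eq_of_mem_getD hdisj hk]

theorem isSYT.letterRow_rowWord (hT : isSYT m T) (k : ℕ) :
    letterRow (rowWord m T) k = T.getD k [] := by
  have hrow := hT.pairwise_lt_getD k
  refine List.Perm.eq_of_pairwise (fun _ _ _ _ h h' => absurd h h'.asymm) pairwise_lt_letterRow
    hrow ?_
  refine (List.perm_ext_iff_of_nodup (pairwise_lt_letterRow.imp ne_of_lt)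
    (hrow.imp ne_of_lt)).mpr fun e => ?_
  simp only [mem_letterRow, hT.rowWord_eq_iff]
  constructor
  · rintro ⟨q, hq, rfl⟩
    exact hq
  · intro he
    obtain ⟨q, rfl⟩ := hT.mem_flatten_iff.mp (mem_flatten_iff_exists_mem_getD.mpr ⟨k, he⟩)
    exact ⟨q, he, rfl⟩

theorem isSYT.length_getD (hT : isSYT m T) (k : ℕ) :
    (T.getD k []).length = letterCount (rowWord m T) m k := by
  rw [← hT.letterRow_rowWord, length_letterRow]

theorem isSYT.staysInRegion_rowWord (hT : isSYT m T) : staysInRegion (rowWord m T) := by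
  intro t k
  refine le_of_forall_lt fun j hj => ?_
  obtain ⟨hj, hle⟩ := lt_letterCount_iff_getElem_letterRow_le.mp hj
  refine lt_letterCount_iff_getElem_letterRow_le.mpr ?_
  simp only [hT.letterRow_rowWord] at hj hle ⊢
  have hj' := hj.trans_le (hT.length_getD_succ_le k)
  have hcol := hT.2.2.2.1 k j hj
  rw [List.getD_eq_getElem _ _ hj, List.getD_eq_getElem _ _ hj'] at hcol
  exact ⟨hj', hcol.le.trans hle⟩

theorem isSYT.tableauOfWord_rowWord (hT : isSYT m T) : tableauOfWord (rowWord m T) = T :=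
  ext_getD_of_notMem hT.staysInRegion_rowWord.nil_notMem_tableauOfWord hT.1 fun k => by
    rw [getD_tableauOfWord, hT.letterRow_rowWord]

theorem bijOn_rowWord (m : ℕ) : Set.BijOn (rowWord m) {T | isSYT m T} {a | staysInRegion a} :=
  Set.InvOn.bijOn ⟨fun _ hT => isSYT.tableauOfWord_rowWord hT, fun a _ => rowWord_tableauOfWord a⟩
    (fun _ hT => isSYT.staysInRegion_rowWord hT) (fun _ ha => isSYT_tableauOfWord ha)

theorem bijOn_columnWord (m : ℕ) :
    Set.BijOn (columnWord m) {T | isSYT m T} {a | staysInRegion a} :=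
  (bijOn_conjWord m).comp (bijOn_rowWord m)

theorem isSYT.numCols_le_iff (hT : isSYT m T) {d : ℕ} :
    numCols T ≤ d ↔ ∀ q, columnWord m T q < d := by
  rw [numCols, hT.length_getD, hT.staysInRegion_rowWord.letterCount_zero_le_iff, columnWord]

theorem isSYT.shapeT_eq_iff (hP : isSYT m P) (hQ : isSYT m Q) :
    shapeT P = shapeT Q ↔ ∀ k, #{i | columnWord m P i = k} = #{i | columnWord m Q i = k} := by
  rw [shapeT_eq_iff_length_getD_eq hP.1 hQ.1]
  simp only [← letterCount_length, hP.length_getD, hQ.length_getD]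
  exact (hP.staysInRegion_rowWord.letterCount_conjWord_eq_iff hQ.staysInRegion_rowWord).symm

theorem isSYT.condT_iff (hT : isSYT m T) {r : ℕ} : condT m r T ↔ condW r (columnWord m T) := by
  have row_lt_iff (q : ℕ) (h : q + 1 < m) :
      rowOf T (q + 1) < rowOf T (q + 2) ↔
        columnWord m T ⟨q + 1, h⟩ ≤ columnWord m T ⟨q, Nat.lt_of_succ_lt h⟩ :=
    hT.staysInRegion_rowWord.lt_iff_conjWord_le
      (p := ⟨q, Nat.lt_of_succ_lt h⟩) (q := ⟨q + 1, h⟩) rfl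
  constructor
  · intro hc q h hq
    exact (row_lt_iff q h).mp (hc (q + 1) (by omega) h hq)
  · intro hc e he hem her
    obtain ⟨q, rfl⟩ := Nat.exists_eq_add_of_le' he
    exact (row_lt_iff q hem).mpr (hc q hem her)

end ColumnWord

theorem card_subtype_eq_of_bijOn {α β : Type*} {f : α → β} {s : Set α} {t : Set β}
    (hf : Set.BijOn f s t) {p : α → Prop} {q : β → Prop} (hp : ∀ x, p x → x ∈ s)
    (hq : ∀ y, q y → y ∈ t) (hpq : ∀ x ∈ s, p x ↔ q (f x)) :
    Nat.card {x // p x} = Nat.card {y // q y} := by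
  have hpre : {x | p x} = s ∩ f ⁻¹' {y | q y} :=
    Set.ext fun x => ⟨fun h => ⟨hp x h, (hpq x (hp x h)).mp h⟩, fun h => (hpq x h.1).mpr h.2⟩
  have hbij : Set.BijOn f {x | p x} {y | q y} := hpre ▸ hf.subset_right hq
  exact Nat.card_congr (hbij.equiv f)

theorem card_tableau_pairs_condT_eq_card_walks_general (m r d : ℕ) :
    Nat.card {PQ : List (List ℕ) × List (List ℕ) //
        isSYT m PQ.1 ∧ isSYT m PQ.2 ∧ shapeT PQ.1 = shapeT PQ.2 ∧
        numCols PQ.1 ≤ d ∧ numCols PQ.2 ≤ d ∧ condT m r PQ.1 ∧ condT m r PQ.2} =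
    Nat.card {ab : (Fin m → ℕ) × (Fin m → ℕ) //
        (∀ i, ab.1 i < d) ∧ (∀ j, ab.2 j < d) ∧
        (∀ k : ℕ, #{i | ab.1 i = k} = #{j | ab.2 j = k}) ∧
        staysInRegion ab.1 ∧ staysInRegion ab.2 ∧ condW r ab.1 ∧ condW r ab.2} := by
  have hbij := bijOn_columnWord m
  refine card_subtype_eq_of_bijOn (hbij.prodMap hbij) (fun PQ h => ⟨h.1, h.2.1⟩)
    (fun ab h => ⟨h.2.2.2.1, h.2.2.2.2.1⟩) ?_
  rintro ⟨P, Q⟩ ⟨hP : isSYT m P, hQ : isSYT m Q⟩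
  have hPwalk : staysInRegion (columnWord m P) := hbij.mapsTo hP
  have hQwalk : staysInRegion (columnWord m Q) := hbij.mapsTo hQ
  simp only [hP.shapeT_eq_iff hQ, hP.numCols_le_iff, hQ.numCols_le_iff, hP.condT_iff,
    hQ.condT_iff]
  tauto

/-- For `m = rn`, the number of pairs of equal-shape standard Young tableaux
with entries `[m]`, at most `d` columns and both satisfying condition (T),
equals the number of closed walks `a₁⋯a_m | b₁⋯b_m` in `ℤ^d` from the origin to
itself (`m` positive steps followed by `m` negative steps taken in reversed
order, so closedness means each direction is used equally often by `a` and `b`)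
staying in the region `x₁ ≥ … ≥ x_d`, with both halves satisfying condition (W). -/
theorem card_tableau_pairs_condT_eq_card_walks (r n d : ℕ)
    (hr : 1 ≤ r) (hn : 1 ≤ n) (hd : 1 ≤ d) :
    Nat.card {PQ : List (List ℕ) × List (List ℕ) //
        isSYT (r * n) PQ.1 ∧ isSYT (r * n) PQ.2 ∧ shapeT PQ.1 = shapeT PQ.2 ∧
        numCols PQ.1 ≤ d ∧ numCols PQ.2 ≤ d ∧
        condT (r * n) r PQ.1 ∧ condT (r * n) r PQ.2} =
    Nat.card {ab : (Fin (r * n) → ℕ) × (Fin (r * n) → ℕ) //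
        (∀ i, ab.1 i < d) ∧ (∀ j, ab.2 j < d) ∧
        (∀ k : ℕ,
          (Finset.univ.filter (fun i => ab.1 i = k)).card =
          (Finset.univ.filter (fun j => ab.2 j = k)).card) ∧
        staysInRegion ab.1 ∧ staysInRegion ab.2 ∧
        condW r ab.1 ∧ condW r ab.2} :=
  card_tableau_pairs_condT_eq_card_walks_general (r * n) r d
end

section
/- The number of permutations σ of [m] with no increasing subsequence of length greater than d equals the number of pairs (P, Q) of standard Young tableaux of the same shape with entries [m] and at most d columns. -/
/-!
Row insertion can be undone as soon as one knows which box it created, and the recording tableau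
`Q` remembers this box as the position of its largest label. Peeling off the largest label of `Q`
therefore recovers a word letter by letter, so `w ↦ (P, Q)` is a bijection from the words using
each of `1, …, m` once onto the pairs of standard tableaux of the same shape.

For the bound on the columns (Schensted), the `j`-th entry of the first row of `P` is at each stage
the least last letter of a weakly increasing subsequence of length `j + 1` of the letters read so
far: an inserted letter `x` replaces the leftmost entry exceeding it, which is exactly the one
position at which `x` is a new least last letter.
-/

section Splitting

variable {α : Type*}

lemma exists_append_of_isLowerSet [Preorder α] {r : List α} (hr : r.Pairwise (· ≤ ·)) {S : Set α}
    (hS : IsLowerSet S) : ∃ a b, r = a ++ b ∧ (∀ z ∈ a, z ∈ S) ∧ ∀ z ∈ b, z ∉ S := by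
  induction r with
  | nil => exact ⟨[], [], by simp⟩
  | cons y r ih =>
    rw [List.pairwise_cons] at hr
    obtain ⟨a, b, rfl, ha, hb⟩ := ih hr.2
    by_cases hy : y ∈ S
    · exact ⟨y :: a, b, rfl, List.forall_mem_cons.2 ⟨hy, ha⟩, hb⟩
    · exact ⟨[], y :: (a ++ b), rfl, by simp, fun z hz hzS =>
        hy (hS ((List.mem_cons.1 hz).elim ge_of_eq (hr.1 z)) hzS)⟩

lemma append_inj_of_mem_of_notMem {a b a' b' : List α} {S : Set α} (h : a ++ b = a' ++ b')
    (ha : ∀ z ∈ a, z ∈ S) (hb : ∀ z ∈ b, z ∉ S) (ha' : ∀ z ∈ a', z ∈ S) (hb' : ∀ z ∈ b', z ∉ S) :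
    a = a' ∧ b = b' := by
  classical
  have left_eq_filter {a b : List α} (ha : ∀ z ∈ a, z ∈ S) (hb : ∀ z ∈ b, z ∉ S) :
      a = (a ++ b).filter (· ∈ S) := by
    rw [List.filter_append, List.filter_eq_self.2 (by simpa using ha),
      List.filter_eq_nil_iff.2 (by simpa using hb), List.append_nil]
  obtain rfl : a = a' := by rw [left_eq_filter ha hb, h, ← left_eq_filter ha' hb']
  exact ⟨rfl, List.append_cancel_left h⟩

end Splitting

section Rows

variable {α : Type*} [Preorder α]

lemma append_cons_inj_of_lt_of_le {a b a' b' : List α} {x x' y : α}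
    (h : a ++ x :: b = a' ++ x' :: b') (ha : ∀ z ∈ a, z < y) (hx : x < y) (hb : ∀ z ∈ b, y ≤ z)
    (ha' : ∀ z ∈ a', z < y) (hx' : x' < y) (hb' : ∀ z ∈ b', y ≤ z) :
    a = a' ∧ x = x' ∧ b = b' := by
  have hax {a : List α} {x : α} (ha : ∀ z ∈ a, z < y) (hx : x < y) :
      ∀ z ∈ a ++ [x], z ∈ Set.Iio y := by simpa [or_imp, forall_and, hx] using ha
  obtain ⟨hsplit, rfl⟩ := append_inj_of_mem_of_notMem (a := a ++ [x]) (a' := a' ++ [x'])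
    (by simpa using h) (hax ha hx) (fun z hz => (hb z hz).not_gt) (hax ha' hx')
    (fun z hz => (hb' z hz).not_gt)
  simpa using hsplit

/-- Row insertion of `x` into the row `r` yields `r'`: `x` replaces the leftmost entry greater
than `x`, and is appended if there is none. -/
def RowInsertion (r : List α) (x : α) (r' : List α) : Prop :=
  ∃ a b, r = a ++ b ∧ r' = a ++ x :: b.tail ∧ (∀ z ∈ a, z ≤ x) ∧ ∀ z ∈ b, x < z

/-- The row `r` may stand directly above the row `s` in a tableau: every entry of `s` has a
strictly smaller entry of `r` above it, so `s` is at most as long as `r`. -/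
def RowAbove (r s : List α) : Prop :=
  ∀ (j : ℕ) (hs : j < s.length), ∃ hr : j < r.length, r[j] < s[j]

lemma rowAbove_nil (r : List α) : RowAbove r [] := nofun

lemma RowAbove.length_le {r s : List α} (h : RowAbove r s) : s.length ≤ r.length := by
  by_contra! hlt
  obtain ⟨hr, -⟩ := h r.length hlt
  exact hr.false

lemma RowAbove.insert {a b s s' : List α} {x y : α} (h : RowAbove (a ++ y :: b) s)
    (ha : ∀ z ∈ a, z ≤ x) (hxy : x < y) (hs : RowInsertion s y s') :
    RowAbove (a ++ x :: b) s' := by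
  obtain ⟨c, d, rfl, rfl, hc, -⟩ := hs
  have hlen : c.length ≤ a.length := by
    by_contra! hlt
    obtain ⟨_, hy⟩ := h a.length (by grind)
    have := hc _ (List.getElem_mem hlt)
    grind
  have ha' (j : ℕ) (hj : j < a.length) : a[j] ≤ x := ha _ (List.getElem_mem hj)
  intro j hj
  rcases lt_trichotomy j c.length with h' | h' | h'
  · have := h j (by grind)
    grind
  · have := ha' j
    grind
  · have := h j (by grind)
    grind

lemma RowAbove.uninsert {a b s s' : List α} {x y : α} (h : RowAbove (a ++ x :: b) s')
    (hb : ∀ z ∈ b, y ≤ z) (hs : RowInsertion s y s') : RowAbove (a ++ y :: b) s := by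
  obtain ⟨c, d, rfl, rfl, -, hd⟩ := hs
  have hlen : c.length ≤ a.length := by
    by_contra! hlt
    obtain ⟨hca, hcy⟩ := h c.length (by simp)
    have := hb ((a ++ x :: b)[c.length]) (by grind)
    grind
  have hd' (j : ℕ) (hj : j < d.length) : y < d[j] := hd _ (List.getElem_mem hj)
  intro j hj
  have := h j
  grind

lemma RowAbove.append_left {r s : List α} (h : RowAbove r s) (x : α) :
    RowAbove (r ++ [x]) s := by
  intro j hs
  have := h j hs
  grind

lemma RowAbove.of_append_left {r s : List α} {x : α} (h : RowAbove (r ++ [x]) s)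
    (hlen : s.length ≤ r.length) : RowAbove r s := by
  intro j hs
  have := h j hs
  grind

lemma RowAbove.append_right {r s : List α} {x : α} (h : RowAbove r s) (hlen : s.length < r.length)
    (hx : ∀ z ∈ r, z < x) : RowAbove r (s ++ [x]) := by
  intro j hs
  have := h j
  grind

lemma RowAbove.of_append_right {r s : List α} {x : α} (h : RowAbove r (s ++ [x])) :
    RowAbove r s := by
  intro j hs
  have := h j
  grind

lemma RowAbove.length_le_of_forall_le {r s : List α} {x : α} (h : RowAbove (r ++ [x]) s)
    (hx : ∀ z ∈ s, z ≤ x) : s.length ≤ r.length := by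
  by_contra! hlt
  obtain ⟨_, hlast⟩ := h r.length hlt
  have := hx _ (List.getElem_mem hlt)
  grind

end Rows

section InsertionStep

variable {α β : Type*} [Preorder α]

/-- One step of the RSK algorithm: row insertion of `x` into `P` produces `P'`, and writing the
label `n` into the corresponding new box of `Q` produces `Q'`. -/
inductive InsertionStep : List (List α) → List (List β) → α → β →
    List (List α) → List (List β) → Prop
  | nil (x : α) (n : β) : InsertionStep [] [] x n [[x]] [[n]]
  | append {r : List α} {x : α} (hr : ∀ z ∈ r, z ≤ x) (s : List β) (n : β)
      (T : List (List α)) (U : List (List β)) :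
      InsertionStep (r :: T) (s :: U) x n ((r ++ [x]) :: T) ((s ++ [n]) :: U)
  | bump {a b : List α} {x y : α} (ha : ∀ z ∈ a, z ≤ x) (hxy : x < y) (hb : ∀ z ∈ b, y ≤ z)
      (s : List β) {n : β} {T T' : List (List α)} {U U' : List (List β)}
      (h : InsertionStep T U y n T' U') :
      InsertionStep ((a ++ y :: b) :: T) (s :: U) x n ((a ++ x :: b) :: T') (s :: U')

namespace InsertionStep

variable {P P' : List (List α)} {Q Q' : List (List β)} {x : α} {n : β}

lemma rowInsertion_headD (h : InsertionStep P Q x n P' Q') :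
    RowInsertion (P.headD []) x (P'.headD []) := by
  cases h with
  | nil => exact ⟨[], [], by simp⟩
  | append hr => exact ⟨_, [], (List.append_nil _).symm, rfl, hr, by simp⟩
  | @bump a b x y ha hxy hb =>
    exact ⟨a, y :: b, rfl, rfl, ha, List.forall_mem_cons.2
      ⟨hxy, fun z hz => hxy.trans_le (hb z hz)⟩⟩

lemma headD_right (h : InsertionStep P Q x n P' Q') :
    Q'.headD [] = Q.headD [] ∨ Q'.headD [] = Q.headD [] ++ [n] := by
  cases h <;> simp

lemma flatten_left_perm (h : InsertionStep P Q x n P' Q') :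
    P'.flatten.Perm (x :: P.flatten) := by
  induction h with
  | nil => simp
  | append => simp
  | @bump a b x y _ _ _ _ _ T T' _ _ _ ih =>
    calc (a ++ x :: b ++ T'.flatten).Perm (a ++ x :: b ++ y :: T.flatten) := ih.append_left _
      _ |>.Perm (x :: (a ++ (b ++ y :: T.flatten))) := by simp
      _ |>.Perm (x :: (a ++ y :: (b ++ T.flatten))) := (List.perm_middle.append_left a).cons x
      _ = x :: (a ++ y :: b ++ T.flatten) := by simp

lemma flatten_right_perm (h : InsertionStep P Q x n P' Q') :
    Q'.flatten.Perm (n :: Q.flatten) := by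
  induction h with
  | nil => simp
  | append => simp
  | bump _ _ _ s _ ih => exact (ih.append_left s).trans List.perm_middle

lemma left_unique {P₁ P₂ : List (List α)} {Q₁ Q₂ : List (List β)} {x₁ x₂ : α}
    (h₁ : InsertionStep P₁ Q₁ x₁ n P' Q') (h₂ : InsertionStep P₂ Q₂ x₂ n P' Q')
    (hnil₁ : [] ∉ Q₁) (hnil₂ : [] ∉ Q₂) (hn₁ : n ∉ Q₁.flatten) (hn₂ : n ∉ Q₂.flatten) :
    P₁ = P₂ ∧ Q₁ = Q₂ ∧ x₁ = x₂ := by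
  induction h₁ generalizing P₂ Q₂ x₂ with
  | nil x n =>
    generalize hP : [[x]] = P' at h₂
    generalize hQ : [[n]] = Q' at h₂
    cases h₂ with
    | nil => simp_all
    | append => simp_all
    | bump =>
      obtain ⟨rfl, -⟩ := List.cons.inj hQ
      simp_all
  | append _ s n T U =>
    generalize hP : _ :: T = P' at h₂
    generalize hQ : _ :: U = Q' at h₂
    cases h₂ with
    | nil => simp_all
    | append => simp_all
    | bump =>
      obtain ⟨rfl, -⟩ := List.cons.inj hQ
      simp_all
  | @bump a₁ b₁ x₁ y₁ ha₁ hxy₁ hb₁ s n T T' U U' _ ih =>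
    generalize hP : _ :: T' = P' at h₂
    generalize hQ : s :: U' = Q' at h₂
    cases h₂ with
    | nil => simp_all
    | append => simp_all
    | @bump a₂ b₂ _ y₂ ha₂ hxy₂ hb₂ _ _ _ _ _ _ h₂ =>
      obtain ⟨hr, rfl⟩ := List.cons.inj hP
      obtain ⟨rfl, rfl⟩ := List.cons.inj hQ
      simp only [List.mem_cons, List.flatten_cons, List.mem_append, not_or] at *
      obtain ⟨rfl, rfl, rfl⟩ := ih h₂ hnil₁.2 hnil₂.2 hn₁.2 hn₂.2
      obtain ⟨rfl, rfl, rfl⟩ := append_cons_inj_of_lt_of_le hr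
        (fun z hz => (ha₁ z hz).trans_lt hxy₁) hxy₁ hb₁
        (fun z hz => (ha₂ z hz).trans_lt hxy₂) hxy₂ hb₂
      exact ⟨rfl, rfl, rfl⟩

end InsertionStep

end InsertionStep

section Tableaux

variable {α β : Type*} [Preorder α] [Preorder β]

/-- A semistandard tableau, given as its list of nonempty rows: rows increase weakly and columns
increase strictly. That row lengths decrease weakly is part of `RowAbove`. -/
structure IsSemistandard (T : List (List α)) : Prop where
  nil_notMem : [] ∉ T
  pairwise_le : ∀ r ∈ T, r.Pairwise (· ≤ ·)
  isChain : T.IsChain RowAbove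

lemma isSemistandard_nil : IsSemistandard ([] : List (List α)) := ⟨by simp, by simp, .nil⟩

lemma isSemistandard_cons {r : List α} {T : List (List α)} :
    IsSemistandard (r :: T) ↔
      r ≠ [] ∧ r.Pairwise (· ≤ ·) ∧ RowAbove r (T.headD []) ∧ IsSemistandard T := by
  have hchain : (r :: T).IsChain RowAbove ↔ RowAbove r (T.headD []) ∧ T.IsChain RowAbove := by
    cases T <;> simp [rowAbove_nil]
  constructor
  · rintro ⟨hnil, hle, h⟩
    rw [hchain] at h
    simp only [List.mem_cons, not_or, forall_eq_or_imp] at hnil hle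
    exact ⟨Ne.symm hnil.1, hle.1, h.1, hnil.2, hle.2, h.2⟩
  · rintro ⟨hr, hle, h, hT⟩
    exact ⟨by simp [hr.symm, hT.nil_notMem], List.forall_mem_cons.2 ⟨hle, hT.pairwise_le⟩,
      hchain.2 ⟨h, hT.isChain⟩⟩

/-- A pair of semistandard tableaux of the same shape. -/
structure IsTableauPair (P : List (List α)) (Q : List (List β)) : Prop where
  left : IsSemistandard P
  right : IsSemistandard Q
  map_length_eq : P.map List.length = Q.map List.length

lemma isTableauPair_cons {r : List α} {T : List (List α)} {s : List β} {U : List (List β)} :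
    IsTableauPair (r :: T) (s :: U) ↔
      (r ≠ [] ∧ r.Pairwise (· ≤ ·) ∧ RowAbove r (T.headD [])) ∧
      (s ≠ [] ∧ s.Pairwise (· ≤ ·) ∧ RowAbove s (U.headD [])) ∧
      r.length = s.length ∧ IsTableauPair T U := by
  constructor
  · rintro ⟨hP, hQ, hlen⟩
    rw [isSemistandard_cons] at hP hQ
    simp only [List.map_cons, List.cons.injEq] at hlen
    exact ⟨⟨hP.1, hP.2.1, hP.2.2.1⟩, ⟨hQ.1, hQ.2.1, hQ.2.2.1⟩, hlen.1, hP.2.2.2, hQ.2.2.2, hlen.2⟩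
  · rintro ⟨⟨hr, hrle, hrT⟩, ⟨hs, hsle, hsU⟩, hlen, hT, hU, hTU⟩
    exact ⟨isSemistandard_cons.2 ⟨hr, hrle, hrT, hT⟩, isSemistandard_cons.2 ⟨hs, hsle, hsU, hU⟩,
      by simp [hlen, hTU]⟩

lemma isTableauPair_nil : IsTableauPair ([] : List (List α)) ([] : List (List β)) :=
  ⟨isSemistandard_nil, isSemistandard_nil, rfl⟩

lemma IsTableauPair.length_headD_eq {P : List (List α)} {Q : List (List β)}
    (h : IsTableauPair P Q) : (P.headD []).length = (Q.headD []).length := by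
  have := h.map_length_eq
  cases P <;> cases Q <;> simp_all

lemma InsertionStep.isTableauPair {P P' : List (List α)} {Q Q' : List (List β)} {x : α} {n : β}
    (h : InsertionStep P Q x n P' Q') (hPQ : IsTableauPair P Q)
    (hn : ∀ z ∈ Q.flatten, z < n) : IsTableauPair P' Q' := by
  induction h with
  | nil => simpa [isTableauPair_cons, rowAbove_nil] using hPQ
  | append hr s n T U =>
    rw [isTableauPair_cons] at hPQ ⊢
    obtain ⟨⟨-, hrle, hrT⟩, ⟨-, hsle, hsU⟩, hlen, hTU⟩ := hPQ
    refine ⟨⟨by simp, ?_, hrT.append_left _⟩, ⟨by simp, ?_, hsU.append_left n⟩, by simpa, hTU⟩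
    · simpa [List.pairwise_append, hrle] using hr
    · simpa [List.pairwise_append, hsle] using fun z hz => (hn z (by simp [hz])).le
  | @bump a b x y ha hxy hb s n T T' U U' h ih =>
    rw [isTableauPair_cons] at hPQ ⊢
    obtain ⟨⟨-, hrle, hrT⟩, ⟨hs, hsle, hsU⟩, hlen, hTU⟩ := hPQ
    simp only [List.flatten_cons, List.mem_append] at hn
    have hTU' := ih hTU fun z hz => hn z (.inr hz)
    have hrT' := hrT.insert ha hxy h.rowInsertion_headD
    have hlen' : (U'.headD []).length ≤ s.length := by
      have := hrT'.length_le
      rw [hTU'.length_headD_eq] at this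
      simpa [← hlen] using this
    refine ⟨⟨by simp, ?_, hrT'⟩, ⟨hs, hsle, ?_⟩, by simpa using hlen, hTU'⟩
    · rw [List.pairwise_append, List.pairwise_cons] at hrle ⊢
      refine ⟨hrle.1, ⟨fun z hz => hxy.le.trans (hb z hz), hrle.2.1.2⟩, fun z hz => ?_⟩
      exact List.forall_mem_cons.2 ⟨ha z hz, fun w hw => hrle.2.2 z hz w (by simp [hw])⟩
    · rcases h.headD_right with hU' | hU' <;> rw [hU'] at hlen' ⊢
      · exact hsU
      · exact hsU.append_right (by simpa using hlen') fun z hz => hn z (.inl hz)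

lemma IsTableauPair.eq_nil_of_headD_eq_nil {P : List (List α)} {Q : List (List β)}
    (h : IsTableauPair P Q) (hQ : Q.headD [] = []) : P = [] ∧ Q = [] := by
  obtain _ | ⟨s, U⟩ := Q
  · exact ⟨by simpa using h.map_length_eq, rfl⟩
  · exact absurd hQ (isSemistandard_cons.1 h.right).1

end Tableaux

section Existence

variable {α β : Type*}

lemma IsTableauPair.exists_insertionStep_right [LinearOrder α] [Preorder β]
    {P : List (List α)} {Q : List (List β)} (hPQ : IsTableauPair P Q) (x : α) (n : β) :
    ∃ P' Q', InsertionStep P Q x n P' Q' := by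
  induction P generalizing Q x with
  | nil =>
    obtain rfl : Q = [] := by simpa using hPQ.map_length_eq.symm
    exact ⟨_, _, .nil x n⟩
  | cons r T ih =>
    obtain _ | ⟨s, U⟩ := Q
    · simpa using hPQ.map_length_eq
    obtain ⟨⟨-, hr, -⟩, -, -, hTU⟩ := isTableauPair_cons.1 hPQ
    obtain ⟨a, b, rfl, ha, hb⟩ := exists_append_of_isLowerSet hr (isLowerSet_Iic x)
    obtain _ | ⟨y, b⟩ := b
    · rw [List.append_nil]
      exact ⟨_, _, .append ha s n T U⟩
    · obtain ⟨T', U', h⟩ := ih hTU y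
      have hyb := (List.pairwise_cons.1 (List.pairwise_append.1 hr).2.1).1
      exact ⟨_, _, .bump ha (by simpa using hb y) hyb s h⟩

lemma IsTableauPair.exists_insertionStep_left_of_mem_head [Preorder α] [PartialOrder β]
    {r : List α} {T : List (List α)} {s : List β} {U : List (List β)} {n : β}
    (hPQ : IsTableauPair (r :: T) (s :: U))
    (hmem : n ∈ s) (hn : ∀ z ∈ (s :: U).flatten, z ≤ n) :
    ∃ P Q x, InsertionStep P Q x n (r :: T) (s :: U) ∧ IsTableauPair P Q := by
  obtain ⟨⟨hr, hrle, hrT⟩, ⟨-, hsle, hsU⟩, hlen, hTU⟩ := isTableauPair_cons.1 hPQ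
  simp only [List.flatten_cons, List.mem_append] at hn
  obtain rfl | ⟨s, c, rfl⟩ := s.eq_nil_or_concat
  · simp at hmem
  obtain rfl | ⟨r, x, rfl⟩ := r.eq_nil_or_concat
  · exact absurd rfl hr
  simp only [List.concat_eq_append, List.pairwise_append, List.mem_singleton, forall_eq,
    List.length_append, List.length_singleton, Nat.add_right_cancel_iff] at *
  obtain rfl : c = n := by
    refine (hn c (by simp)).antisymm ?_
    rcases List.mem_append.1 hmem with hns | hns
    · exact hsle.2.2 n hns
    · exact (List.mem_singleton.1 hns).le
  have hUs : (U.headD []).length ≤ s.length :=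
    hsU.length_le_of_forall_le fun z hz => hn z (.inr (by cases U <;> simp_all))
  obtain rfl | hs := eq_or_ne s []
  · obtain ⟨rfl, rfl⟩ := hTU.eq_nil_of_headD_eq_nil (by simpa using hUs)
    obtain rfl : r = [] := by simpa using hlen
    exact ⟨[], [], x, .nil x c, isTableauPair_nil⟩
  · refine ⟨r :: T, s :: U, x, .append hrle.2.2 s c T U, isTableauPair_cons.2
      ⟨⟨?_, hrle.1, hrT.of_append_left ?_⟩, ⟨hs, hsle.1, hsU.of_append_left hUs⟩, hlen, hTU⟩⟩
    · rwa [← List.length_pos_iff, hlen, List.length_pos_iff]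
    · rwa [hTU.length_headD_eq, hlen]

lemma RowAbove.exists_append_cons [LinearOrder α] {r s s' : List α} {y : α} (h : RowAbove r s')
    (hr : r.Pairwise (· ≤ ·)) (hs : RowInsertion s y s') :
    ∃ a x b, r = a ++ x :: b ∧ (∀ z ∈ a, z ≤ x) ∧ x < y ∧ ∀ z ∈ b, y ≤ z := by
  obtain ⟨a, b, rfl, ha, hb⟩ := exists_append_of_isLowerSet hr (isLowerSet_Iio y)
  obtain rfl | ⟨a, x, rfl⟩ := a.eq_nil_or_concat
  · obtain ⟨c, d, rfl, rfl, -, -⟩ := hs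
    obtain ⟨hcb, hy⟩ := h c.length (by simp)
    simp only [List.nil_append] at hcb hy
    exact absurd (show b[c.length] < y by simpa using hy) (hb _ (List.getElem_mem hcb))
  · rw [List.concat_eq_append] at hr ha ⊢
    exact ⟨a, x, b, by simp, fun z hz => (List.pairwise_append.1 (List.pairwise_append.1 hr).1).2.2
      z hz x (by simp), ha x (by simp), fun z hz => not_lt.1 (hb z hz)⟩

lemma IsTableauPair.exists_insertionStep_left [LinearOrder α] [PartialOrder β]
    {P' : List (List α)} {Q' : List (List β)} {n : β} (hPQ : IsTableauPair P' Q')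
    (hmem : n ∈ Q'.flatten) (hn : ∀ z ∈ Q'.flatten, z ≤ n) :
    ∃ P Q x, InsertionStep P Q x n P' Q' ∧ IsTableauPair P Q := by
  induction P' generalizing Q' with
  | nil =>
    obtain rfl : Q' = [] := by simpa using hPQ.map_length_eq.symm
    simp at hmem
  | cons r T' ih =>
    obtain _ | ⟨s, U'⟩ := Q'
    · simpa using hPQ.map_length_eq
    by_cases hns : n ∈ s
    · exact hPQ.exists_insertionStep_left_of_mem_head hns hn
    obtain ⟨⟨-, hrle, hrT⟩, ⟨hs, hsle, hsU⟩, hlen, hTU'⟩ := isTableauPair_cons.1 hPQ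
    simp only [List.flatten_cons, List.mem_append] at hmem hn
    obtain ⟨T, U, y, h, hTU⟩ := ih hTU' (hmem.resolve_left hns) fun z hz => hn z (.inr hz)
    obtain ⟨a, x, b, rfl, ha, hxy, hb⟩ := hrT.exists_append_cons hrle h.rowInsertion_headD
    refine ⟨(a ++ y :: b) :: T, s :: U, x, .bump ha hxy hb s h, isTableauPair_cons.2
      ⟨⟨by simp, ?_, hrT.uninsert hb h.rowInsertion_headD⟩, ⟨hs, hsle, ?_⟩, by simpa using hlen,
        hTU⟩⟩
    · rw [List.pairwise_append, List.pairwise_cons] at hrle ⊢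
      refine ⟨hrle.1, ⟨hb, hrle.2.1.2⟩, fun z hz => List.forall_mem_cons.2
        ⟨(ha z hz).trans hxy.le, fun w hw => hrle.2.2 z hz w (by simp [hw])⟩⟩
    · rcases h.headD_right with hU' | hU' <;> rw [hU'] at hsU
      · exact hsU
      · exact hsU.of_append_right

end Existence

section RSKStep

lemma insertInRow_of_forall_le {r : List ℕ} {x : ℕ} (hr : ∀ z ∈ r, z ≤ x) :
    insertInRow r x = (r ++ [x], none) := by
  have : r.findIdx? (fun z => decide (x < z)) = none := by simpa using hr
  simp [insertInRow, this]

lemma insertInRow_append_cons {a b : List ℕ} {x y : ℕ} (ha : ∀ z ∈ a, z ≤ x) (hxy : x < y) :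
    insertInRow (a ++ y :: b) x = (a ++ x :: b, some y) := by
  have ha' : a.findIdx? (fun z => decide (x < z)) = none := by simpa using ha
  have : (a ++ y :: b).findIdx? (fun z => decide (x < z)) = some a.length := by
    simp [List.findIdx?_append, ha', List.findIdx?_cons, hxy]
  simp [insertInRow, this]

lemma rowInsertT_append_cons {a b : List ℕ} {x y : ℕ} (T : List (List ℕ)) (ha : ∀ z ∈ a, z ≤ x)
    (hxy : x < y) : rowInsertT ((a ++ y :: b) :: T) x = (a ++ x :: b) :: rowInsertT T y := by
  simp [rowInsertT, insertInRow_append_cons ha hxy]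

lemma newBoxRow_append_cons {a b : List ℕ} {x y : ℕ} (T : List (List ℕ)) (ha : ∀ z ∈ a, z ≤ x)
    (hxy : x < y) : newBoxRow ((a ++ y :: b) :: T) x = newBoxRow T y + 1 := by
  simp [newBoxRow, rowInsertT_append_cons T ha hxy, List.range_succ_eq_map, List.findIdx_cons,
    List.findIdx_map, Function.comp_def]

lemma rskStep_nil (x n : ℕ) : rskStep ([], []) (x, n) = ([[x]], [[n]]) := by
  simp [rskStep, rowInsertT]

lemma rskStep_cons_of_forall_le {r : List ℕ} {x : ℕ} (hr : ∀ z ∈ r, z ≤ x) (s : List ℕ) (n : ℕ)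
    (T U : List (List ℕ)) :
    rskStep (r :: T, s :: U) (x, n) = ((r ++ [x]) :: T, (s ++ [n]) :: U) := by
  have hT : rowInsertT (r :: T) x = (r ++ [x]) :: T := by
    simp [rowInsertT, insertInRow_of_forall_le hr]
  have hbox : newBoxRow (r :: T) x = 0 := by
    simp [newBoxRow, hT, List.range_succ_eq_map, List.findIdx_cons]
  simp [rskStep, hT, hbox]

lemma rskStep_append_cons {a b : List ℕ} {x y : ℕ} (ha : ∀ z ∈ a, z ≤ x) (hxy : x < y)
    (s : List ℕ) (n : ℕ) (T U : List (List ℕ)) :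
    rskStep ((a ++ y :: b) :: T, s :: U) (x, n) =
      ((a ++ x :: b) :: (rskStep (T, U) (y, n)).1, s :: (rskStep (T, U) (y, n)).2) := by
  simp only [rskStep, rowInsertT_append_cons T ha hxy, newBoxRow_append_cons T ha hxy,
    List.length_cons, Nat.add_lt_add_iff_right, List.getD_cons_succ, List.set_cons_succ,
    List.cons_append]
  split_ifs <;> rfl

lemma InsertionStep.rskStep_eq {P Q P' Q' : List (List ℕ)} {x n : ℕ}
    (h : InsertionStep P Q x n P' Q') : rskStep (P, Q) (x, n) = (P', Q') := by
  induction h with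
  | nil x n => exact rskStep_nil x n
  | append hr s n T U => exact rskStep_cons_of_forall_le hr s n T U
  | bump ha hxy _ s _ ih => rw [rskStep_append_cons ha hxy, ih]

lemma IsTableauPair.insertionStep_rskStep {P Q : List (List ℕ)} (hPQ : IsTableauPair P Q)
    (x n : ℕ) :
    InsertionStep P Q x n (rskStep (P, Q) (x, n)).1 (rskStep (P, Q) (x, n)).2 := by
  obtain ⟨P', Q', h⟩ := hPQ.exists_insertionStep_right x n
  rwa [h.rskStep_eq]

end RSKStep

section RSK

lemma rskPQ_concat (w : List ℕ) (x : ℕ) :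
    rskPQ (w ++ [x]) = rskStep (rskPQ w) (x, w.length + 1) := by
  simp [rskPQ, List.range'_1_concat, List.zip_append, add_comm]

theorem rskPQ_invariants (w : List ℕ) :
    IsTableauPair (rskPQ w).1 (rskPQ w).2 ∧ (rskPQ w).1.flatten.Perm w ∧
      (rskPQ w).2.flatten.Perm (List.range' 1 w.length) := by
  induction w using List.reverseRecOn with
  | nil => exact ⟨isTableauPair_nil, .nil, .nil⟩
  | append_singleton w x ih =>
    obtain ⟨hPQ, hP, hQ⟩ := ih
    have h := hPQ.insertionStep_rskStep x (w.length + 1)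
    rw [rskPQ_concat]
    refine ⟨h.isTableauPair hPQ fun z hz => ?_, ?_, ?_⟩
    · have := hQ.mem_iff.1 hz
      grind
    · exact h.flatten_left_perm.trans ((hP.cons x).trans (List.perm_append_singleton x w).symm)
    · rw [List.length_append, List.length_singleton, List.range'_1_concat, add_comm 1]
      exact h.flatten_right_perm.trans ((hQ.cons _).trans (List.perm_append_singleton _ _).symm)

lemma isTableauPair_rskPQ (w : List ℕ) : IsTableauPair (rskPQ w).1 (rskPQ w).2 :=
  (rskPQ_invariants w).1

lemma flatten_rskPQ_fst_perm (w : List ℕ) : (rskPQ w).1.flatten.Perm w := (rskPQ_invariants w).2.1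

lemma flatten_rskPQ_snd_perm (w : List ℕ) :
    (rskPQ w).2.flatten.Perm (List.range' 1 w.length) := (rskPQ_invariants w).2.2

lemma insertionStep_rskPQ (w : List ℕ) (x : ℕ) :
    InsertionStep (rskPQ w).1 (rskPQ w).2 x (w.length + 1) (rskPQ (w ++ [x])).1
      (rskPQ (w ++ [x])).2 := by
  rw [rskPQ_concat]
  exact (isTableauPair_rskPQ w).insertionStep_rskStep x (w.length + 1)

theorem rskPQ_injective : Function.Injective rskPQ := by
  intro w w' h
  have hlen : w.length = w'.length := by
    rw [← (flatten_rskPQ_fst_perm w).length_eq, h, (flatten_rskPQ_fst_perm w').length_eq]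
  induction w using List.reverseRecOn generalizing w' with
  | nil => exact (List.length_eq_zero_iff.1 hlen.symm).symm
  | append_singleton w x ih =>
    obtain rfl | ⟨w', x', rfl⟩ := w'.eq_nil_or_concat
    · simp at hlen
    rw [List.concat_eq_append] at h hlen ⊢
    have hlen' : w.length = w'.length := by simpa using hlen
    have hw := insertionStep_rskPQ w x
    have hw' := insertionStep_rskPQ w' x'
    rw [← h, ← hlen'] at hw'
    have label_notMem {v : List ℕ} (hv : w.length = v.length) :
        w.length + 1 ∉ (rskPQ v).2.flatten := by
      simp [(flatten_rskPQ_snd_perm v).mem_iff, hv, add_comm]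
    obtain ⟨hP, hQ, rfl⟩ := hw.left_unique hw' (isTableauPair_rskPQ w).right.nil_notMem
      (isTableauPair_rskPQ w').right.nil_notMem (label_notMem rfl) (label_notMem hlen')
    rw [ih (Prod.ext hP hQ) hlen']

theorem IsTableauPair.exists_rskPQ_eq {n : ℕ} {P Q : List (List ℕ)} (hPQ : IsTableauPair P Q)
    (hQ : Q.flatten.Perm (List.range' 1 n)) : ∃ w, rskPQ w = (P, Q) := by
  induction n generalizing P Q with
  | zero =>
    have hnil : Q.headD [] = [] := by cases Q <;> simp_all
    obtain ⟨rfl, rfl⟩ := hPQ.eq_nil_of_headD_eq_nil hnil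
    exact ⟨[], rfl⟩
  | succ n ih =>
    have hmem (z : ℕ) : z ∈ Q.flatten ↔ 1 ≤ z ∧ z ≤ n + 1 := by
      rw [hQ.mem_iff, List.mem_range'_1]
      omega
    obtain ⟨P₀, Q₀, x, h, hPQ₀⟩ := hPQ.exists_insertionStep_left ((hmem (n + 1)).2 (by omega))
      fun z hz => ((hmem z).1 hz).2
    have hQ₀ : Q₀.flatten.Perm (List.range' 1 n) := by
      rw [List.range'_1_concat, add_comm 1] at hQ
      exact (List.perm_cons _).1 (h.flatten_right_perm.symm.trans
        (hQ.trans (List.perm_append_singleton _ _)))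
    obtain ⟨w, hw⟩ := ih hPQ₀ hQ₀
    have hlen : w.length = n := by
      have hlen := (flatten_rskPQ_snd_perm w).length_eq
      rw [hw, hQ₀.length_eq] at hlen
      simpa using hlen.symm
    exact ⟨w ++ [x], by rw [rskPQ_concat, hw, hlen, h.rskStep_eq]⟩

end RSK

section StandardTableaux

lemma isChain_rowAbove_iff {T : List (List ℕ)} :
    T.IsChain RowAbove ↔ T.IsChain (fun r s => s.length ≤ r.length) ∧
      ∀ i j : ℕ, j < (T.getD (i + 1) []).length →
        (T.getD i []).getD j 0 < (T.getD (i + 1) []).getD j 0 := by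
  constructor
  · refine fun h => ⟨h.imp fun _ _ => RowAbove.length_le, fun i j hj => ?_⟩
    have hi : i + 1 < T.length := by
      by_contra!
      simp [this] at hj
    simp only [List.getD_eq_getElem, hi, Nat.lt_of_succ_lt hi] at hj ⊢
    obtain ⟨hj', hlt⟩ := List.isChain_iff_getElem.1 h i hi j hj
    simpa [hj, hj'] using hlt
  · rintro ⟨hlen, hlt⟩
    refine List.isChain_iff_getElem.2 fun i hi j hj => ?_
    have hj' := hj.trans_le (List.isChain_iff_getElem.1 hlen i hi)
    have := hlt i j
    simp only [List.getD_eq_getElem, hi, Nat.lt_of_succ_lt hi, hj, hj', forall_const] at this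
    exact ⟨hj', this⟩

lemma pairwise_le_iff_pairwise_lt {α : Type*} [PartialOrder α] {l : List α} (hl : l.Nodup) :
    l.Pairwise (· ≤ ·) ↔ l.Pairwise (· < ·) :=
  ⟨fun h => (h.and hl).imp fun h => lt_of_le_of_ne h.1 h.2, fun h => h.imp le_of_lt⟩

lemma isSYT_iff {m : ℕ} {T : List (List ℕ)} :
    isSYT m T ↔ IsSemistandard T ∧ T.flatten.Perm (List.range' 1 m) := by
  have hrows (hT : T.flatten.Perm (List.range' 1 m)) :
      (∀ r ∈ T, r.IsChain (· < ·)) ↔ ∀ r ∈ T, r.Pairwise (· ≤ ·) := by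
    have hnodup := List.nodup_flatten.1 (hT.nodup_iff.2 List.nodup_range')
    refine forall₂_congr fun r hr => ?_
    rw [List.isChain_iff_pairwise, pairwise_le_iff_pairwise_lt (hnodup.1 r hr)]
  constructor
  · rintro ⟨hnil, hlen, hrow, hcol, hperm⟩
    exact ⟨⟨hnil, (hrows hperm).1 hrow, isChain_rowAbove_iff.2 ⟨hlen, hcol⟩⟩, hperm⟩
  · rintro ⟨hT, hperm⟩
    obtain ⟨hlen, hcol⟩ := isChain_rowAbove_iff.1 hT.isChain
    exact ⟨hT.nil_notMem, hlen, (hrows hperm).2 hT.pairwise_le, hcol, hperm⟩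

lemma numCols_eq_of_shapeT_eq {P Q : List (List ℕ)} (h : shapeT P = shapeT Q) :
    numCols P = numCols Q := by
  cases P <;> cases Q <;> simp_all [shapeT, numCols]

theorem bijOn_rskPQ (m : ℕ) :
    Set.BijOn rskPQ {w | w.Perm (List.range' 1 m)}
      {PQ | isSYT m PQ.1 ∧ isSYT m PQ.2 ∧ shapeT PQ.1 = shapeT PQ.2} := by
  refine ⟨fun w hw => ?_, rskPQ_injective.injOn, ?_⟩
  · have hPQ := isTableauPair_rskPQ w
    have hlen : w.length = m := by simpa using hw.length_eq
    exact ⟨isSYT_iff.2 ⟨hPQ.left, (flatten_rskPQ_fst_perm w).trans hw⟩,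
      isSYT_iff.2 ⟨hPQ.right, hlen ▸ flatten_rskPQ_snd_perm w⟩, hPQ.map_length_eq⟩
  · rintro ⟨P, Q⟩ ⟨hP, hQ, hshape⟩
    rw [isSYT_iff] at hP hQ
    obtain ⟨w, hw⟩ := IsTableauPair.exists_rskPQ_eq ⟨hP.1, hQ.1, hshape⟩ hQ.2
    have hwP := flatten_rskPQ_fst_perm w
    rw [hw] at hwP
    exact ⟨w, hwP.symm.trans hP.2, hw⟩

end StandardTableaux

section Permutations

lemma permList_eq_ofFn {m : ℕ} (σ : Equiv.Perm (Fin m)) :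
    permList σ = List.ofFn fun i => (σ i : ℕ) + 1 := by
  simp [permList, List.ofFn_eq_map]

theorem bijOn_permList (m : ℕ) :
    Set.BijOn permList (Set.univ : Set (Equiv.Perm (Fin m))) {w | w.Perm (List.range' 1 m)} := by
  refine ⟨fun σ _ => ?_, Function.Injective.injOn fun σ τ h => ?_, fun w hw => ?_⟩
  · have hid : List.range' 1 m = List.ofFn fun i : Fin m => (i : ℕ) + 1 :=
      List.ext_getElem (by simp) fun i _ _ => by simp [add_comm]
    change (permList σ).Perm _
    rw [permList_eq_ofFn, hid]
    exact Equiv.Perm.ofFn_comp_perm σ fun i : Fin m => (i : ℕ) + 1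
  · ext i
    simpa using List.map_inj_left.1 h i (List.mem_finRange i)
  · have hlen : w.length = m := by simpa using hw.length_eq
    subst hlen
    have hrange (i : Fin w.length) : 1 ≤ w[i] ∧ w[i] < 1 + w.length := by
      simpa using hw.mem_iff.1 (List.getElem_mem i.2)
    have hinj : Function.Injective fun i : Fin w.length =>
        (⟨w[i] - 1, by have := hrange i; omega⟩ : Fin w.length) := by
      intro i j hij
      have := hrange i
      have := hrange j
      simp only [Fin.mk.injEq] at hij
      exact Fin.ext ((hw.nodup_iff.2 List.nodup_range').getElem_inj_iff.1
        (show w[i] = w[j] by omega))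
    refine ⟨Equiv.ofBijective _ hinj.bijective_of_finite, trivial, ?_⟩
    refine List.ext_getElem (by simp [permList]) fun i _ hi => ?_
    have := (hrange ⟨i, hi⟩).1
    simpa [permList] using Nat.sub_add_cancel this

end Permutations

section Schensted

variable {α : Type*}

lemma append_singleton_sublist_append_singleton_iff {s w : List α} {x z : α} :
    (s ++ [z]).Sublist (w ++ [x]) ↔ (s ++ [z]).Sublist w ∨ z = x ∧ s.Sublist w := by
  rw [← List.reverse_sublist, List.reverse_append, List.reverse_append, List.reverse_singleton,
    List.reverse_singleton, List.singleton_append, List.singleton_append, List.cons_sublist_cons',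
    List.reverse_sublist, ← List.reverse_concat, List.reverse_sublist]

/-- `z` is the last letter of a weakly increasing subsequence of `w` of length `j + 1`. -/
def IsIncreasingEnd [LE α] (w : List α) (j : ℕ) (z : α) : Prop :=
  ∃ s, (s ++ [z]).Sublist w ∧ (s ++ [z]).Pairwise (· ≤ ·) ∧ s.length = j

lemma isIncreasingEnd_append_singleton_iff [Preorder α] {w : List α} {x z : α} {j : ℕ} :
    IsIncreasingEnd (w ++ [x]) j z ↔
      IsIncreasingEnd w j z ∨ z = x ∧ ∀ i, j = i + 1 → ∃ y ≤ x, IsIncreasingEnd w i y := by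
  constructor
  · rintro ⟨s, hsw, hs, rfl⟩
    rcases append_singleton_sublist_append_singleton_iff.1 hsw with hsw' | ⟨rfl, hsw'⟩
    · exact .inl ⟨s, hsw', hs, rfl⟩
    · refine .inr ⟨rfl, fun i hi => ?_⟩
      obtain rfl | ⟨s, y, rfl⟩ := s.eq_nil_or_concat
      · simp at hi
      rw [List.concat_eq_append] at *
      rw [List.pairwise_append] at hs
      exact ⟨y, hs.2.2 y (by simp) z (by simp), s, hsw', hs.1, by simpa using hi⟩
  · rintro (⟨s, hsw, hs, hj⟩ | ⟨rfl, h⟩)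
    · exact ⟨s, hsw.trans (List.sublist_append_left w [x]), hs, hj⟩
    · obtain _ | i := j
      · exact ⟨[], by simp, by simp, rfl⟩
      obtain ⟨y, hyz, s, hsw, hs, rfl⟩ := h i rfl
      refine ⟨s ++ [y], hsw.append (List.Sublist.refl [z]), ?_, by simp⟩
      have hsz (a : α) (ha : a ∈ s ++ [y]) : a ≤ z := by
        rcases List.mem_append.1 ha with ha | ha
        · exact ((List.pairwise_append.1 hs).2.2 a ha y (by simp)).trans hyz
        · rwa [List.mem_singleton.1 ha]
      exact List.pairwise_append.2 ⟨hs, List.pairwise_singleton _ z, by simpa using hsz⟩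

/-- The `j`-th entry of `p` is the least last letter of a weakly increasing subsequence of `w` of
length `j + 1`, and is missing if there is no such subsequence. -/
def IsLeastEnds [LE α] (w p : List α) : Prop :=
  ∀ j, (∀ z ∈ p[j]?, IsIncreasingEnd w j z) ∧ ∀ z, IsIncreasingEnd w j z → ∃ y ∈ p[j]?, y ≤ z

lemma isLeastEnds_nil [LE α] : IsLeastEnds ([] : List α) [] :=
  fun _ => ⟨by simp, fun z ⟨s, hs, _⟩ => by simp at hs⟩

lemma IsLeastEnds.rowInsertion [Preorder α] {w p p' : List α} {x : α} (h : IsLeastEnds w p)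
    (hp : RowInsertion p x p') : IsLeastEnds (w ++ [x]) p' := by
  obtain ⟨a, b, rfl, rfl, ha, hb⟩ := hp
  have hne {j : ℕ} (hj : j ≠ a.length) : (a ++ x :: b.tail)[j]? = (a ++ b)[j]? := by grind
  have hle {j : ℕ} (hj : j ≤ a.length) : ∃ y ∈ (a ++ x :: b.tail)[j]?, y ≤ x := by
    obtain hj | rfl := hj.lt_or_eq
    · exact ⟨a[j], by grind, ha _ (List.getElem_mem hj)⟩
    · exact ⟨x, by grind, le_rfl⟩
  have hlt {j : ℕ} {y : α} (hy : y ∈ (a ++ b)[j]?) (hyx : y ≤ x) : j < a.length := by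
    by_contra! hj
    rw [List.getElem?_append_right hj] at hy
    exact (hb y (List.mem_of_getElem? hy)).not_ge hyx
  refine fun j => ⟨fun z hz => ?_, fun z hz => ?_⟩
  · rw [isIncreasingEnd_append_singleton_iff]
    obtain rfl | hj := eq_or_ne j a.length
    · refine .inr ⟨by grind, fun i hi => ?_⟩
      exact ⟨a[i], ha _ (List.getElem_mem _), (h i).1 _ (by grind)⟩
    · exact .inl ((h j).1 z (hne hj ▸ hz))
  · rcases isIncreasingEnd_append_singleton_iff.1 hz with hz | ⟨rfl, hz⟩
    · obtain ⟨y, hy, hyz⟩ := (h j).2 z hz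
      obtain rfl | hj := eq_or_ne j a.length
      · rw [List.getElem?_append_right le_rfl] at hy
        have hxy : x < y := hb y (List.mem_of_getElem? hy)
        exact ⟨x, by grind, hxy.le.trans hyz⟩
      · exact ⟨y, (hne hj).symm ▸ hy, hyz⟩
    · apply hle
      obtain _ | i := j
      · exact Nat.zero_le _
      obtain ⟨y, hyz, hy⟩ := hz i rfl
      obtain ⟨y', hy', hyy'⟩ := (h i).2 y hy
      exact hlt hy' (hyy'.trans hyz)

lemma IsLeastEnds.length_le_iff [LE α] {w p : List α} (h : IsLeastEnds w p) (d : ℕ) :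
    p.length ≤ d ↔ ∀ s : List α, s.Sublist w → s.Pairwise (· ≤ ·) → s.length ≤ d := by
  constructor
  · intro hp s hsw hs
    obtain rfl | ⟨s, z, rfl⟩ := s.eq_nil_or_concat
    · simp
    rw [List.concat_eq_append] at hsw hs ⊢
    obtain ⟨y, hy, -⟩ := (h s.length).2 z ⟨s, hsw, hs, rfl⟩
    obtain ⟨hlt, -⟩ := List.getElem?_eq_some_iff.1 hy
    simpa using hlt.trans_le hp
  · intro hw
    by_contra! hd
    obtain ⟨s, hsw, hs, hlen⟩ := (h d).1 p[d] (by simp)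
    have := hw _ hsw hs
    simp [hlen] at this

lemma isLeastEnds_rskPQ (w : List ℕ) : IsLeastEnds w ((rskPQ w).1.headD []) := by
  induction w using List.reverseRecOn with
  | nil => exact isLeastEnds_nil
  | append_singleton w x ih => exact ih.rowInsertion (insertionStep_rskPQ w x).rowInsertion_headD

theorem numCols_rskPQ_le_iff (w : List ℕ) (d : ℕ) :
    numCols (rskPQ w).1 ≤ d ↔
      ∀ s : List ℕ, s.Sublist w → s.Pairwise (· ≤ ·) → s.length ≤ d := by
  rw [← (isLeastEnds_rskPQ w).length_le_iff, numCols]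
  cases (rskPQ w).1 <;> rfl

end Schensted

section IncreasingSubsequences

lemma forall_strictMono_comp_le_iff {α : Type*} [Preorder α] {n : ℕ} (f : Fin n → α) (d : ℕ) :
    (∀ (L : ℕ) (t : Fin L → Fin n), StrictMono t → StrictMono (fun j => f (t j)) → L ≤ d) ↔
      ∀ s : List α, s.Sublist (List.ofFn f) → s.Pairwise (· < ·) → s.length ≤ d := by
  constructor
  · intro h s hsub hs
    obtain ⟨t, ht⟩ := List.sublist_iff_exists_fin_orderEmbedding_get_eq.1 hsub
    refine h s.length (fun i => (t i).cast List.length_ofFn) (fun i j hij => t.strictMono hij)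
      fun i j hij => ?_
    simpa only [ht, List.get_ofFn] using List.pairwise_iff_get.1 hs i j hij
  · intro h L t ht hft
    have hsub : ((List.ofFn t).map f).Sublist (List.ofFn f) := by
      rw [List.ofFn_eq_map (f := f)]
      exact (List.sublist_of_subperm_of_pairwise
        ((List.nodup_ofFn.2 ht.injective).subperm fun i _ => List.mem_finRange i)
        (List.pairwise_ofFn.2 fun i j hij => ht hij) (List.pairwise_lt_finRange n)).map f
    have hinc : ((List.ofFn t).map f).Pairwise (· < ·) := by
      rw [List.map_ofFn, List.pairwise_ofFn]
      exact fun i j hij => hft hij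
    simpa using h _ hsub hinc

lemma forall_strictMono_perm_le_iff {m : ℕ} (σ : Equiv.Perm (Fin m)) (d : ℕ) :
    (∀ (L : ℕ) (t : Fin L → Fin m), StrictMono t → StrictMono (fun j => σ (t j)) → L ≤ d) ↔
      numCols (rskPQ (permList σ)).1 ≤ d := by
  have hnodup : (permList σ).Nodup :=
    ((bijOn_permList m).mapsTo trivial).nodup_iff.2 List.nodup_range'
  calc (∀ (L : ℕ) (t : Fin L → Fin m), StrictMono t → StrictMono (fun j => σ (t j)) → L ≤ d)
    _ ↔ ∀ (L : ℕ) (t : Fin L → Fin m), StrictMono t → StrictMono (fun j => (σ (t j) : ℕ) + 1) →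
          L ≤ d := by simp [StrictMono]
    _ ↔ ∀ s : List ℕ, s.Sublist (permList σ) → s.Pairwise (· < ·) → s.length ≤ d := by
      rw [permList_eq_ofFn, forall_strictMono_comp_le_iff fun i => (σ i : ℕ) + 1]
    _ ↔ ∀ s : List ℕ, s.Sublist (permList σ) → s.Pairwise (· ≤ ·) → s.length ≤ d := by
      refine forall₂_congr fun s hs => ?_
      rw [pairwise_le_iff_pairwise_lt (hnodup.sublist hs)]
    _ ↔ numCols (rskPQ (permList σ)).1 ≤ d := (numCols_rskPQ_le_iff _ d).symm

end IncreasingSubsequences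

/-- The number of permutations of `[m]` with no increasing subsequence of length
greater than `d` equals the number of pairs of equal-shape standard Young
tableaux with entries `[m]` and at most `d` columns. -/
theorem card_perms_no_long_increasing_eq_card_tableau_pairs (m d : ℕ) :
    Nat.card {σ : Equiv.Perm (Fin m) //
        ∀ (L : ℕ) (t : Fin L → Fin m), StrictMono t →
          StrictMono (fun j => σ (t j)) → L ≤ d} =
    Nat.card {PQ : List (List ℕ) × List (List ℕ) //
        isSYT m PQ.1 ∧ isSYT m PQ.2 ∧ shapeT PQ.1 = shapeT PQ.2 ∧
        numCols PQ.1 ≤ d ∧ numCols PQ.2 ≤ d} := by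
  have hRSK := (bijOn_rskPQ m).comp (bijOn_permList m)
  refine Nat.card_eq_of_bijective (fun σ => ⟨rskPQ (permList σ.1), ?_⟩) ⟨?_, ?_⟩
  · obtain ⟨hP, hQ, hshape⟩ := hRSK.mapsTo (Set.mem_univ σ.1)
    have hd := (forall_strictMono_perm_le_iff σ.1 d).1 σ.2
    exact ⟨hP, hQ, hshape, hd, numCols_eq_of_shapeT_eq hshape ▸ hd⟩
  · exact fun σ τ h => Subtype.ext
      (hRSK.injOn (Set.mem_univ σ.1) (Set.mem_univ τ.1) (Subtype.ext_iff.1 h))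
  · rintro ⟨PQ, hP, hQ, hshape, hd, -⟩
    obtain ⟨σ, -, rfl⟩ := hRSK.surjOn ⟨hP, hQ, hshape⟩
    exact ⟨⟨σ, (forall_strictMono_perm_le_iff σ d).2 hd⟩, rfl⟩
end

section
/- The map ρ defined on pairs of walks not staying in the region x₁ > x₂ > ... > x_d, which at the first exit time finds the unique coordinate j with p_j = p_{j+1} and swaps the roles of directions j and j+1 in the remainder of the walk, is an involution, and it changes the endpoint (q₁, ..., q_d) of the walk to (q₁, ..., q_{j−1}, q_{j+1}, q_j, q_{j+2}, ..., q_d). -/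
open scoped Classical

/-- The point of the walk after `t` steps: the walk starts at
`(d−1, d−2, …, 0)` and each step `c_i ∈ Fin d` is the positive unit step
`+e_{c_i}`; coordinate `j` after `t` steps is `d − 1 − j` plus the number of
steps among the first `t` in direction `j`. -/
def walkPt (d : ℕ) (c : List (Fin d)) (t : ℕ) (j : Fin d) : ℤ :=
  ((d : ℤ) - 1 - (j : ℤ)) + ((c.take t).count j : ℤ)

/-- The open region `R = {x : x₁ > x₂ > … > x_d}` of strictly decreasing
coordinates. -/
def inR (d : ℕ) (x : Fin d → ℤ) : Prop :=
  ∀ j k : Fin d, j < k → x k < x j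

/-- The walk `c` does not stay in `R`. -/
def leavesR (d : ℕ) (c : List (Fin d)) : Prop :=
  ∃ t, t ≤ c.length ∧ ¬ inR d (walkPt d c t)

/-- The reflection involution `ρ`: if the walk leaves `R`, let `t` be the first
exit time and `j` the (unique) index with `p_j = p_{j+1}` at time `t`; keep the
first `t` steps and swap directions `j` and `j+1` in the remaining steps.
Otherwise leave the walk unchanged. -/
noncomputable def rho (d : ℕ) (c : List (Fin d)) : List (Fin d) :=
  if h : ∃ t, t ≤ c.length ∧ ¬ inR d (walkPt d c t) then
    let t := Nat.find h
    if hj : ∃ j : ℕ, ∃ h1 : j + 1 < d,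
        walkPt d c t ⟨j, by omega⟩ = walkPt d c t ⟨j + 1, h1⟩ then
      let j := Nat.find hj
      have h1 : j + 1 < d := (Nat.find_spec hj).choose
      c.take t ++ (c.drop t).map (fun x : Fin d =>
        if (x : ℕ) = j then (⟨j + 1, h1⟩ : Fin d)
        else if (x : ℕ) = j + 1 then (⟨j, by omega⟩ : Fin d) else x)
    else c
  else c

/-!
At the first exit time the walk has just made a step `+e_k` from a strictly decreasing point, so the
only strict inequality `x_j > x_{j+1}` that can fail is the one with `j + 1 = k`, and it degenerates
to an equality. The point reached is therefore fixed by exactly one adjacent transposition. Applying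
that transposition to the later steps permutes the endpoint accordingly. The walk up to the exit
time is unchanged, so the same exit time and transposition are found again the second time.
-/

section StrictAnti

variable {ι : Type*} [DecidableEq ι] {x y : ι → ℤ} {e i j k l : ι}

theorem eq_and_eq_of_eq_add_single_of_le (hy : y = x + Pi.single e 1) (hx : x k < x j)
    (hle : y j ≤ y k) : k = e ∧ y j = y k := by
  simp only [hy, Pi.add_apply, Pi.single_apply] at hle ⊢
  grind

theorem exists_covBy_eq_of_eq_add_single [Preorder ι] [LocallyFiniteOrder ι]
    (hy : y = x + Pi.single e 1) (hx : StrictAnti x) (hy_anti : ¬ StrictAnti y) :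
    ∃ j k, j ⋖ k ∧ y j = y k := by
  rw [strictAnti_iff_forall_covBy] at hy_anti
  push Not at hy_anti
  obtain ⟨j, k, hjk, hle⟩ := hy_anti
  exact ⟨j, k, hjk, (eq_and_eq_of_eq_add_single_of_le hy (hx hjk.lt) hle).2⟩

theorem covBy_eq_unique_of_eq_add_single [LinearOrder ι] (hy : y = x + Pi.single e 1)
    (hx : StrictAnti x) (hij : i ⋖ j) (hyij : y i = y j) (hkl : k ⋖ l) (hykl : y k = y l) :
    i = k ∧ j = l := by
  obtain ⟨rfl, -⟩ := eq_and_eq_of_eq_add_single_of_le hy (hx hij.lt) hyij.le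
  obtain ⟨rfl, -⟩ := eq_and_eq_of_eq_add_single_of_le hy (hx hkl.lt) hykl.le
  exact ⟨hij.unique_left hkl, rfl⟩

end StrictAnti

section MapAfter

variable {α : Type*}

/-- The list `l` with `f` applied to every entry after the first `t`. When `l` is a walk and `f`
swaps two directions, this reflects the part of the walk after time `t`. -/
def mapAfter (t : ℕ) (f : α → α) (l : List α) : List α :=
  l.take t ++ (l.drop t).map f

theorem take_mapAfter (t : ℕ) (f : α → α) (l : List α) : (mapAfter t f l).take t = l.take t := by
  rcases le_total t l.length with ht | ht
  · exact List.take_left' (List.length_take_of_le ht)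
  · simp [mapAfter, List.take_of_length_le ht, List.drop_eq_nil_of_le ht]

theorem drop_mapAfter (t : ℕ) (f : α → α) (l : List α) :
    (mapAfter t f l).drop t = (l.drop t).map f := by
  rcases le_total t l.length with ht | ht
  · exact List.drop_left' (List.length_take_of_le ht)
  · simp [mapAfter, List.take_of_length_le ht, List.drop_eq_nil_of_le ht]

theorem mapAfter_involutive (t : ℕ) {f : α → α} (hf : Function.Involutive f) :
    Function.Involutive (mapAfter t f) := by
  intro l
  rw [mapAfter, take_mapAfter, drop_mapAfter, List.map_map, hf.comp_self, List.map_id,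
    List.take_append_drop]

end MapAfter

section Walk

variable {d : ℕ} {w w' : List (Fin d)} {s t : ℕ} {j k : Fin d}

theorem inR_iff_strictAnti {x : Fin d → ℤ} : inR d x ↔ StrictAnti x :=
  Iff.rfl

theorem inR_walkPt_zero (w : List (Fin d)) : inR d (walkPt d w 0) := by
  intro j k hjk
  simp only [walkPt, List.take_zero, List.count_nil]
  omega

theorem walkPt_succ (ht : t < w.length) :
    walkPt d w (t + 1) = walkPt d w t + Pi.single w[t] 1 := by
  funext i
  simp only [walkPt, List.take_succ_eq_append_getElem ht, List.count_append, List.count_singleton,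
    beq_iff_eq, Pi.add_apply, Pi.single_apply, @eq_comm _ i]
  push_cast
  ring

theorem walkPt_eq_of_take_eq (h : w'.take t = w.take t) (hst : s ≤ t) :
    walkPt d w' s = walkPt d w s := by
  have hs : w'.take s = w.take s := by
    rw [← min_eq_left hst, ← List.take_take, h, List.take_take]
  funext i
  rw [walkPt, walkPt, hs]

theorem walkPt_length_mapAfter (w : List (Fin d)) (t : ℕ) (σ : Equiv.Perm (Fin d)) (i : Fin d) :
    walkPt d (mapAfter t σ w) (mapAfter t σ w).length (σ i) =
      walkPt d w t (σ i) + (walkPt d w w.length i - walkPt d w t i) := by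
  have hcount : w.count i = (w.take t).count i + (w.drop t).count i := by
    rw [← List.count_append, List.take_append_drop]
  simp only [walkPt, List.take_length, mapAfter, List.count_append,
    List.count_map_of_injective _ _ σ.injective, hcount]
  push_cast
  ring

theorem walkPt_length_mapAfter_swap (h : walkPt d w t j = walkPt d w t k) (i : Fin d) :
    walkPt d (mapAfter t (Equiv.swap j k) w) (mapAfter t (Equiv.swap j k) w).length i =
      walkPt d w w.length (Equiv.swap j k i) := by
  have hend := walkPt_length_mapAfter w t (Equiv.swap j k) (Equiv.swap j k i)
  rw [Equiv.swap_apply_self, Equiv.apply_swap_eq_self h] at hend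
  rw [hend, add_sub_cancel]

/-- The times at which the walk `w` lies outside `R`. The first exit time is the `t` with
`IsLeast (exitTimes w) t`. -/
def exitTimes (w : List (Fin d)) : Set ℕ :=
  {t | t ≤ w.length ∧ ¬ inR d (walkPt d w t)}

theorem isLeast_exitTimes_of_take_eq (ht : IsLeast (exitTimes w) t) (h : w'.take t = w.take t) :
    IsLeast (exitTimes w') t := by
  obtain ⟨⟨htw, hout⟩, hmin⟩ := ht
  have htw' : t ≤ w'.length := by
    rw [← List.length_take_of_le htw, ← h]
    exact List.length_take_le' t w'
  refine ⟨⟨htw', by rwa [walkPt_eq_of_take_eq h le_rfl]⟩, fun s ⟨_, hs⟩ => ?_⟩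
  by_contra! hst
  rw [walkPt_eq_of_take_eq h hst.le] at hs
  exact hst.not_ge (hmin ⟨hst.le.trans htw, hs⟩)

theorem exists_strictAnti_walkPt_eq_add_single (ht : IsLeast (exitTimes w) t) :
    ∃ x e, StrictAnti x ∧ walkPt d w t = x + Pi.single e 1 := by
  obtain ⟨⟨htw, hout⟩, hmin⟩ := ht
  obtain _ | s := t
  · exact absurd (inR_walkPt_zero w) hout
  · refine ⟨walkPt d w s, w[s], inR_iff_strictAnti.1 ?_, walkPt_succ htw⟩
    by_contra hs
    exact s.lt_succ_self.not_ge (hmin ⟨s.le_succ.trans htw, hs⟩)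

theorem existsUnique_covBy_walkPt_eq (ht : IsLeast (exitTimes w) t) :
    ∃! p : Fin d × Fin d, p.1 ⋖ p.2 ∧ walkPt d w t p.1 = walkPt d w t p.2 := by
  obtain ⟨x, e, hx, hxe⟩ := exists_strictAnti_walkPt_eq_add_single ht
  obtain ⟨j, k, hjk, h⟩ := exists_covBy_eq_of_eq_add_single hxe hx
    (mt inR_iff_strictAnti.2 ht.1.2)
  refine ⟨(j, k), ⟨hjk, h⟩, fun p ⟨hp, hp_eq⟩ => ?_⟩
  exact Prod.ext_iff.2 (covBy_eq_unique_of_eq_add_single hxe hx hp hp_eq hjk h)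

theorem rho_eq_mapAfter_swap (ht : IsLeast (exitTimes w) t) (hjk : j ⋖ k)
    (h : walkPt d w t j = walkPt d w t k) : rho d w = mapAfter t (Equiv.swap j k) w := by
  have hw : ∃ t, t ≤ w.length ∧ ¬ inR d (walkPt d w t) := ⟨t, ht.1⟩
  obtain rfl : Nat.find hw = t := (Nat.isLeast_find hw).unique ht
  obtain ⟨j, hj⟩ := j
  obtain ⟨k, hk⟩ := k
  obtain rfl : j + 1 = k := by simpa using hjk
  have hex : ∃ j : ℕ, ∃ h1 : j + 1 < d,
      walkPt d w (Nat.find hw) ⟨j, by omega⟩ = walkPt d w (Nat.find hw) ⟨j + 1, h1⟩ :=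
    ⟨j, hk, h⟩
  have hfind : Nat.find hex = j := by
    obtain ⟨hi, hi_eq⟩ := Nat.find_spec hex
    have hpair := (existsUnique_covBy_walkPt_eq ht).unique
      (y₁ := (⟨Nat.find hex, by omega⟩, ⟨Nat.find hex + 1, hi⟩)) (y₂ := (⟨j, hj⟩, ⟨j + 1, hk⟩))
      ⟨by simp, hi_eq⟩ ⟨hjk, h⟩
    exact congrArg (fun p => (p.1 : ℕ)) hpair
  simp only [rho, dif_pos hw, dif_pos hex, mapAfter]
  congr 2
  funext x
  simp only [Equiv.swap_apply_def, Fin.ext_iff, hfind]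

theorem rho_involutive (d : ℕ) : Function.Involutive (rho d) := by
  intro w
  by_cases hw : leavesR d w
  · have ht : IsLeast (exitTimes w) (Nat.find hw) := Nat.isLeast_find hw
    obtain ⟨⟨j, k⟩, ⟨hjk, h⟩, -⟩ := existsUnique_covBy_walkPt_eq ht
    have htake := take_mapAfter (Nat.find hw) (Equiv.swap j k) w
    have hpt := walkPt_eq_of_take_eq htake le_rfl
    rw [rho_eq_mapAfter_swap ht hjk h,
      rho_eq_mapAfter_swap (isLeast_exitTimes_of_take_eq ht htake) hjk (by rwa [hpt]),
      mapAfter_involutive _ (Equiv.swap_apply_self j k)]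
  · have hrho : rho d w = w := dif_neg hw
    rw [hrho, hrho]

theorem walkPt_length_rho (ht : IsLeast (exitTimes w) t) (hjk : j ⋖ k)
    (h : walkPt d w t j = walkPt d w t k) (i : Fin d) :
    walkPt d (rho d w) (rho d w).length i = walkPt d w w.length (Equiv.swap j k i) := by
  rw [rho_eq_mapAfter_swap ht hjk h, walkPt_length_mapAfter_swap h]

end Walk

/-- The reflection map `ρ` on walks from `(d−1, …, 0)` not staying in
`R = {x₁ > … > x_d}` is an involution, and it exchanges coordinates `j` and
`j + 1` of the endpoint, where `j` is the unique index with `p_j = p_{j+1}` at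
the first exit time `t`: if the walk ends at `(q₁, …, q_d)` then `ρ(w)` ends at
`(q₁, …, q_{j−1}, q_{j+1}, q_j, q_{j+2}, …, q_d)`. -/
theorem rho_involution_and_endpoint (d : ℕ) (c : List (Fin d))
    (hc : ∃ t, t ≤ c.length ∧ ¬ inR d (walkPt d c t)) :
    rho d (rho d c) = c ∧
    ∃ j : ℕ, ∃ h1 : j + 1 < d,
      walkPt d c (Nat.find hc) ⟨j, by omega⟩ =
        walkPt d c (Nat.find hc) ⟨j + 1, h1⟩ ∧
      walkPt d (rho d c) (rho d c).length ⟨j, by omega⟩ =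
        walkPt d c c.length ⟨j + 1, h1⟩ ∧
      walkPt d (rho d c) (rho d c).length ⟨j + 1, h1⟩ =
        walkPt d c c.length ⟨j, by omega⟩ ∧
      ∀ k : Fin d, (k : ℕ) ≠ j → (k : ℕ) ≠ j + 1 →
        walkPt d (rho d c) (rho d c).length k = walkPt d c c.length k := by
  have ht : IsLeast (exitTimes c) (Nat.find hc) := Nat.isLeast_find hc
  obtain ⟨⟨⟨j, hj⟩, ⟨k, hk⟩⟩, ⟨hjk, h⟩, -⟩ := existsUnique_covBy_walkPt_eq ht
  obtain rfl : j + 1 = k := by simpa using hjk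
  have hend := walkPt_length_rho ht hjk h
  refine ⟨rho_involutive d c, j, hk, h, ?_, ?_, fun i hij hik => ?_⟩
  · rw [hend, Equiv.swap_apply_left]
  · rw [hend, Equiv.swap_apply_right]
  · rw [hend, Equiv.swap_apply_of_ne_of_ne (Fin.ne_of_val_ne hij) (Fin.ne_of_val_ne hik)]
end
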